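/- Suppose n ≥ 2 and 1 ≤ p < ∞. Let φ ∈ Möb(B), ψ = |Dφ|^{(n−2)/2}, and let W* denote the adjoint of W_{φ,ψ} acting on h^{p′}(B) under the duality pairing ⟨f,g⟩ = ∫_S f*(ζ) g*(ζ) dσ(ζ). Then for every f ∈ h^{p′}(B) and every y ∈ B, (W* f)(y) = ∫_S f*(ζ)·((1−|φ^{-1}(0)|²)/|φ^{-1}(0)−ζ|²)^{(n−2)/2}·(1−|y|²)/|y−φ(ζ)|ⁿ dσ(ζ), where φ also denotes the extension of φ to the closed unit ball. -/

import Mathlib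

/-!
The adjoint is tested on the Poisson kernel. Let `P_y` be the extended Poisson kernel with pole
parameter `y`. It is harmonic on the ball and continuous up to the sphere, hence in `h^p`, and so
the Poisson representation of `W* f ∈ h^q`, with `q > 1` because `p < ∞`, reads
`(W* f)(y) = ⟨P_y, W* f⟩ = ⟨W P_y, f⟩`. The claimed formula is the last pairing, since on the sphere
`|Dφ(ζ)| = (1 - |α|²) / |α - ζ|²` with `α = φ⁻¹(0)` and `P_y(φ(ζ)) = (1 - |y|²) / |y - φ(ζ)|ⁿ`.

Three facts carry the argument.

* `poisson_repr`: functions in `h^q`, `1 < q ≤ ∞`, are the Poisson integrals of their boundary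
  values. On a larger ball (`poisson_of_ball`) this comes from the invariance in `t` of
  `∫ u(tζ) v(t⁻¹ζ) dσ(ζ)` for harmonic `u`, `v` (`pairing_const`). That is Green's identity on the
  sphere, which in turn rests on the rotation invariance of the Hausdorff measure: the fields
  `ζᵢ∂ⱼ - ζⱼ∂ᵢ` have mean zero, and summing these relations gives a linear differential equation in
  the radius which forces divergence-free fields to have zero flux. The passage to `h^q` is by
  dilation and uniform integrability (`tendsto_integral_of_Ls_bound`).
* `mobius_ball`: the distortion of a Möbius self-map of the ball is governed by
  `E(x) = (1 - 2⟨α,x⟩ + |α|²|x|²) / (1 - |α|²)`. A reflection of `ℝ̂ⁿ` is induced by a linear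
  reflection of the light cone of a Lorentz form, so `|φ(x) - φ(y)|² E(x) E(y) = |x - y|²` for some
  quadratic function `E` whose coefficients are null; preservation of the sphere and `φ(α) = 0`
  determine `E`.
* `wco_extPoisson_harmOn`: the function `W P_y` is again harmonic. By `mobius_ball` it is a
  quadratic polynomial divided by the `n/2`-th power of `1 - 2⟨w,x⟩ + |w|²|x|²`, `w = φ⁻¹(y)`, and
  such a quotient is harmonic exactly when the numerator vanishes at the reflected point `w/|w|²`;
  only the sufficiency is needed (`quadKern_harmOn`).
-/

open MeasureTheory Metric Set Filter
open scoped ENNReal NNReal Topology InnerProductSpace Classical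

noncomputable section

/-- Euclidean space `ℝⁿ`. -/
abbrev Eucl (n : ℕ) := EuclideanSpace ℝ (Fin n)

/-- The open unit ball `B` in `ℝⁿ`. -/
def uBall (n : ℕ) : Set (Eucl n) := Metric.ball 0 1

/-- The unit sphere `S = ∂B` in `ℝⁿ`. -/
def uSphere (n : ℕ) : Set (Eucl n) := Metric.sphere 0 1

/-- The normalized surface area measure `σ` on the unit sphere (as a measure on `ℝⁿ`
supported on `S`), normalized so that `σ(S) = 1`. -/
def sphMeasure (n : ℕ) : Measure (Eucl n) :=
  ((Measure.hausdorffMeasure ((n : ℝ) - 1) (uSphere n))⁻¹ : ℝ≥0∞) •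
    (Measure.hausdorffMeasure ((n : ℝ) - 1) : Measure (Eucl n)).restrict (uSphere n)

/-- `i`-th standard basis vector of `ℝⁿ`. -/
def basisV (n : ℕ) (i : Fin n) : Eucl n := EuclideanSpace.single i 1

/-- The Laplacian `Δf(x) = ∑ᵢ ∂²f/∂xᵢ²(x)`. -/
def lap {n : ℕ} {F : Type*} [NormedAddCommGroup F] [NormedSpace ℝ F]
    (f : Eucl n → F) (x : Eucl n) : F :=
  ∑ i : Fin n, iteratedFDeriv ℝ 2 f x ![basisV n i, basisV n i]

/-- `f` is harmonic on `s`: twice continuously differentiable with vanishing Laplacian. -/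
def HarmOn {n : ℕ} {F : Type*} [NormedAddCommGroup F] [NormedSpace ℝ F]
    (f : Eucl n → F) (s : Set (Eucl n)) : Prop :=
  ContDiffOn ℝ 2 f s ∧ ∀ x ∈ s, lap f x = 0

/-- The Jacobian matrix `Dφ(x) = (∂φ⁽ⁱ⁾/∂xⱼ)` of a map `φ : ℝⁿ → ℝⁿ`. -/
def jacMatrix {n : ℕ} (φ : Eucl n → Eucl n) (x : Eucl n) : Matrix (Fin n) (Fin n) ℝ :=
  Matrix.of fun i j => fderiv ℝ φ x (basisV n j) i

/-- `|Dφ(x)| := |J_φ(x)|^{1/n}`, where `J_φ` is the Jacobian determinant. -/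
def normDeriv {n : ℕ} (φ : Eucl n → Eucl n) (x : Eucl n) : ℝ :=
  |(jacMatrix φ x).det| ^ ((n : ℝ)⁻¹)

/-- The weighted composition operator `W_{φ,ψ} f = ψ · (f ∘ φ)`. -/
def wco {n : ℕ} (φ : Eucl n → Eucl n) (ψ : Eucl n → ℂ) (f : Eucl n → ℂ) : Eucl n → ℂ :=
  fun x => ψ x * f (φ x)

/-- The set of values `(∫_S |f(rζ)|^p dσ(ζ))^{1/p}`, `0 ≤ r < 1`. -/
def hpNormSet (n : ℕ) (p : ℝ) (f : Eucl n → ℂ) : Set ℝ :=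
  (fun r : ℝ => (∫ ζ, ‖f (r • ζ)‖ ^ p ∂(sphMeasure n)) ^ (1 / p)) '' Set.Ico (0 : ℝ) 1

/-- The set of values `|f(x)|`, `x ∈ B`. -/
def hInfSet (n : ℕ) (f : Eucl n → ℂ) : Set ℝ := (fun x => ‖f x‖) '' uBall n

/-- Membership in the harmonic Hardy space `h^p(B)`, `1 ≤ p ≤ ∞`. -/
def MemHp (n : ℕ) (p : ℝ≥0∞) (f : Eucl n → ℂ) : Prop :=
  HarmOn f (uBall n) ∧
    if p = ⊤ then BddAbove (hInfSet n f) else BddAbove (hpNormSet n p.toReal f)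

/-- The `h^p(B)` norm, `1 ≤ p ≤ ∞`. -/
def hpNorm (n : ℕ) (p : ℝ≥0∞) (f : Eucl n → ℂ) : ℝ :=
  if p = ⊤ then sSup (hInfSet n f) else sSup (hpNormSet n p.toReal f)

/-- The operator norm of a map `T` on `h^p(B)`. -/
def opNormHp (n : ℕ) (p : ℝ≥0∞) (T : (Eucl n → ℂ) → (Eucl n → ℂ)) : ℝ :=
  sInf {C : ℝ | 0 ≤ C ∧ ∀ f, MemHp n p f → hpNorm n p (T f) ≤ C * hpNorm n p f}

/-- The one-point compactification `ℝ̂ⁿ = ℝⁿ ∪ {∞}`. -/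
abbrev EuclHat (n : ℕ) := OnePoint (Eucl n)

/-- Reflection in the sphere `S(a, r)`, as a self-map of `ℝ̂ⁿ`:
`x ↦ a + r²(x−a)/|x−a|²`, with `a ↦ ∞` and `∞ ↦ a`. -/
def sphereRefl (n : ℕ) (a : Eucl n) (r : ℝ) : EuclHat n → EuclHat n :=
  OnePoint.rec (↑a)
    (fun x => if x = a then OnePoint.infty
      else ↑(a + (r ^ 2 / ‖x - a‖ ^ 2) • (x - a)))

/-- Reflection in the hyperplane `{x : x·a = t}` (`a` a unit vector), as a self-map of `ℝ̂ⁿ`: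
`x ↦ x − 2(x·a − t)a`, with `∞ ↦ ∞`. -/
def hyperRefl (n : ℕ) (a : Eucl n) (t : ℝ) : EuclHat n → EuclHat n :=
  OnePoint.rec OnePoint.infty
    (fun x => ↑(x - (2 * (⟪x, a⟫_ℝ - t)) • a))

/-- A reflection of `ℝ̂ⁿ` in a sphere or a hyperplane. -/
def IsReflection (n : ℕ) (f : EuclHat n → EuclHat n) : Prop :=
  (∃ a r, 0 < r ∧ f = sphereRefl n a r) ∨
    (∃ a t, ‖a‖ = 1 ∧ f = hyperRefl n a t)

/-- A Möbius transformation of `ℝ̂ⁿ`: a finite composition of reflections in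
spheres or hyperplanes. -/
def IsMobiusHat (n : ℕ) (g : EuclHat n → EuclHat n) : Prop :=
  ∃ L : List (EuclHat n → EuclHat n), L ≠ [] ∧ (∀ f ∈ L, IsReflection n f) ∧
    g = L.foldr (· ∘ ·) id

/-- `φ : ℝⁿ → ℝⁿ` is, on `Ω`, the restriction of a Möbius transformation of `ℝ̂ⁿ`. -/
def IsMobiusRestr (n : ℕ) (φ : Eucl n → Eucl n) (Ω : Set (Eucl n)) : Prop :=
  ∃ g : EuclHat n → EuclHat n, IsMobiusHat n g ∧ ∀ x ∈ Ω, g ↑x = ↑(φ x)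

/-- `φ ∈ Möb(B)`: `φ` agrees, on an open neighborhood of the closed unit ball, with a
Möbius transformation of `ℝ̂ⁿ`, and `φ` maps `B` bijectively onto `B`.  (Such a `φ` is
the canonical extension of the Möbius transformation to the closed unit ball.) -/
def IsMobiusBall (n : ℕ) (φ : Eucl n → Eucl n) : Prop :=
  (∃ U : Set (Eucl n), IsOpen U ∧ Metric.closedBall 0 1 ⊆ U ∧ IsMobiusRestr n φ U) ∧
    Set.BijOn φ (uBall n) (uBall n)

/-- The nontangential approach region `Γ_δ(ζ) = {x ∈ B : |x − ζ| < (δ/2)(1 − |x|²)}`. -/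
def ntRegion (n : ℕ) (δ : ℝ) (ζ : Eucl n) : Set (Eucl n) :=
  {x | x ∈ uBall n ∧ ‖x - ζ‖ < δ / 2 * (1 - ‖x‖ ^ 2)}

/-- `g` has nontangential limit `L` at `ζ ∈ S`. -/
def HasNTLimit (n : ℕ) (g : Eucl n → ℂ) (ζ : Eucl n) (L : ℂ) : Prop :=
  ∀ δ : ℝ, 1 < δ → Filter.Tendsto g (nhdsWithin ζ (ntRegion n δ ζ)) (nhds L)

/-- The Poisson kernel `P(x, ζ) = (1 − |x|²)/|x − ζ|ⁿ` for the unit ball. -/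
def poissonK (n : ℕ) (x ζ : Eucl n) : ℝ := (1 - ‖x‖ ^ 2) / ‖x - ζ‖ ^ n

/-- The extended Poisson kernel `P_y(x) = (1 − |x|²|y|²)/(1 − 2x·y + |x|²|y|²)^{n/2}`. -/
def extPoisson (n : ℕ) (y x : Eucl n) : ℝ :=
  (1 - ‖x‖ ^ 2 * ‖y‖ ^ 2) / (1 - 2 * ⟪x, y⟫_ℝ + ‖x‖ ^ 2 * ‖y‖ ^ 2) ^ ((n : ℝ) / 2)

/-- The Gauss hypergeometric function `₂F₁(a, b; c; r) = ∑ₖ (a)ₖ(b)ₖ/((c)ₖ k!) rᵏ`. -/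
def gaussHyper (a b c r : ℝ) : ℝ :=
  ∑' k : ℕ, ((ascPochhammer ℝ k).eval a * (ascPochhammer ℝ k).eval b) /
    ((ascPochhammer ℝ k).eval c * (Nat.factorial k)) * r ^ k

/-- A linear operator on (the function class) `h^p(B)`. -/
def IsLinOnHp (n : ℕ) (p : ℝ≥0∞) (T : (Eucl n → ℂ) → (Eucl n → ℂ)) : Prop :=
  (∀ f, MemHp n p f → MemHp n p (T f)) ∧
    (∀ f g, MemHp n p f → MemHp n p g → T (f + g) = T f + T g) ∧
    (∀ (c : ℂ) (f), MemHp n p f → T (c • f) = c • T f)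

/-- A compact operator on `h^p(B)`: a linear operator mapping the unit ball of `h^p(B)`
to a totally bounded set. -/
def IsCompactOnHp (n : ℕ) (p : ℝ≥0∞) (K : (Eucl n → ℂ) → (Eucl n → ℂ)) : Prop :=
  IsLinOnHp n p K ∧
    ∀ ε : ℝ, 0 < ε → ∃ G : Finset (Eucl n → ℂ),
      ∀ f, MemHp n p f → hpNorm n p f ≤ 1 → ∃ g ∈ G, hpNorm n p (K f - g) ≤ ε

/-- The essential norm of an operator `T` on `h^p(B)`: the distance, in operator norm,
from `T` to the compact operators on `h^p(B)`. -/
def essNormHp (n : ℕ) (p : ℝ≥0∞) (T : (Eucl n → ℂ) → (Eucl n → ℂ)) : ℝ :=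
  sInf {c : ℝ | ∃ K, IsCompactOnHp n p K ∧ opNormHp n p (fun f => T f - K f) = c}

/-- The duality pairing `⟨f, g⟩ = ∫_S f* g* dσ`, relative to a boundary-function
assignment `bd`. -/
def hpPairing (n : ℕ) (bd : (Eucl n → ℂ) → (Eucl n → ℂ)) (f g : Eucl n → ℂ) : ℂ :=
  ∫ ζ, bd f ζ * bd g ζ ∂(sphMeasure n)

end

/-! ### The surface measure of the sphere -/

/-- The sphere projects onto a ball of `ℝᵐ`, which has positive `m`-dimensional measure, by a
Lipschitz map. -/
lemma hausdorff_sphere_pos (m : ℕ) :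
    0 < (Measure.hausdorffMeasure (m : ℝ) : Measure (Eucl (m + 1))) (uSphere (m + 1)) := by
  set π : Eucl (m + 1) → (Fin m → ℝ) := fun x i => x i.succ with hπ
  have hlip : LipschitzWith 1 π := by
    refine LipschitzWith.of_dist_le_mul fun x y => ?_
    rw [NNReal.coe_one, one_mul, dist_pi_le_iff dist_nonneg]
    intro i
    rw [dist_eq_norm, dist_eq_norm]
    exact PiLp.norm_apply_le (x - y) i.succ
  have hsub : {y : Fin m → ℝ | ∑ i, y i ^ 2 < 1} ⊆ π '' uSphere (m + 1) := by
    intro y hy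
    refine ⟨WithLp.toLp 2 (Fin.cons (Real.sqrt (1 - ∑ i, y i ^ 2)) y), ?_, ?_⟩
    · have hy' : ∑ i, y i ^ 2 < 1 := hy
      simp only [uSphere, mem_sphere_zero_iff_norm, EuclideanSpace.norm_eq]
      rw [Fin.sum_univ_succ]
      simp only [Fin.cons_zero, Fin.cons_succ, Real.norm_eq_abs, sq_abs]
      rw [Real.sq_sqrt (by linarith)]
      simp
    · ext i
      simp [hπ]
  have hopen : IsOpen {y : Fin m → ℝ | ∑ i, y i ^ 2 < 1} :=
    isOpen_lt (by fun_prop) continuous_const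
  have hpos : 0 < volume {y : Fin m → ℝ | ∑ i, y i ^ 2 < 1} :=
    hopen.measure_pos _ ⟨0, by simp⟩
  have h := (hlip.lipschitzOnWith (s := uSphere (m + 1))).hausdorffMeasure_image_le
    (d := (m : ℝ)) (by positivity)
  have hvol : (Measure.hausdorffMeasure (m : ℝ) : Measure (Fin m → ℝ)) = volume := by
    have := hausdorffMeasure_pi_real (ι := Fin m)
    rwa [Fintype.card_fin] at this
  rw [hvol] at h
  refine lt_of_lt_of_le (lt_of_lt_of_le hpos (measure_mono hsub)) (h.trans ?_)
  simp

/-- Radial projection onto the sphere is `2`-Lipschitz outside the open unit ball. -/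
lemma norm_radial_sub_le {E : Type*} [NormedAddCommGroup E] [NormedSpace ℝ E] {x y : E}
    (hx : 1 ≤ ‖x‖) (hy : 1 ≤ ‖y‖) : ‖‖x‖⁻¹ • x - ‖y‖⁻¹ • y‖ ≤ 2 * ‖x - y‖ := by
  have hx0 : 0 < ‖x‖ := by linarith
  have hy0 : 0 < ‖y‖ := by linarith
  have h1 : ‖x‖⁻¹ • x - ‖y‖⁻¹ • y = ‖x‖⁻¹ • (x - y) + (‖x‖⁻¹ - ‖y‖⁻¹) • y := by module
  have h2 : ‖(‖x‖⁻¹ - ‖y‖⁻¹) • y‖ = ‖x‖⁻¹ * |‖y‖ - ‖x‖| := by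
    rw [norm_smul, Real.norm_eq_abs]
    have : ‖x‖⁻¹ - ‖y‖⁻¹ = (‖y‖ - ‖x‖) * (‖x‖⁻¹ * ‖y‖⁻¹) := by field_simp
    rw [this, abs_mul, abs_of_pos (by positivity : 0 < ‖x‖⁻¹ * ‖y‖⁻¹)]
    field_simp
  have h3 : |‖y‖ - ‖x‖| ≤ ‖x - y‖ := by
    rw [abs_sub_comm]; exact abs_norm_sub_norm_le x y
  have hi : ‖x‖⁻¹ ≤ 1 := inv_le_one_of_one_le₀ hx
  have hi0 : 0 ≤ ‖x‖⁻¹ := by positivity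
  rw [h1]
  refine (norm_add_le _ _).trans ?_
  rw [h2, norm_smul, Real.norm_eq_abs, abs_of_nonneg hi0]
  nlinarith [norm_nonneg (x - y), abs_nonneg (‖y‖ - ‖x‖)]

/-- The sphere is covered by the radial projections of the `2(m+1)` faces of the cube
`[-1,1]^{m+1}`, each of which is a Lipschitz image of a box in `ℝᵐ`. -/
lemma hausdorff_sphere_lt_top (m : ℕ) :
    (Measure.hausdorffMeasure (m : ℝ) : Measure (Eucl (m + 1))) (uSphere (m + 1)) < ⊤ := by
  set face : Fin (m + 1) → ℝ → (Fin m → ℝ) → Eucl (m + 1) :=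
    fun k s y => WithLp.toLp 2 (Fin.insertNth k s y) with hface
  set box : Set (Fin m → ℝ) := Metric.closedBall 0 1 with hbox
  set F : Fin (m + 1) → ℝ → (Fin m → ℝ) → Eucl (m + 1) :=
    fun k s y => ‖face k s y‖⁻¹ • face k s y with hF
  have hcov : uSphere (m + 1) ⊆ ⋃ k : Fin (m + 1), (F k 1 '' box ∪ F k (-1) '' box) := by
    intro x hx
    have hx1 : ‖x‖ = 1 := by simpa [uSphere] using hx
    obtain ⟨k, -, hk⟩ := Finset.exists_max_image Finset.univ (fun i => |x i|)
      ⟨0, Finset.mem_univ _⟩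
    have hk0 : 0 < |x k| := by
      by_contra! hcon
      have : x = 0 := by
        ext i
        have := (hk i (Finset.mem_univ i)).trans hcon
        simpa using this
      rw [this] at hx1
      simp at hx1
    have hkey : F k (x k / |x k|) (fun i => x (k.succAbove i) / |x k|) = x := by
      have : face k (x k / |x k|) (fun i => x (k.succAbove i) / |x k|) = |x k|⁻¹ • x := by
        ext j
        simp only [hface, PiLp.smul_apply, smul_eq_mul]
        refine Fin.succAboveCases k ?_ (fun i => ?_) j
        · simp [div_eq_inv_mul]
        · simp [div_eq_inv_mul]
      simp only [hF, this, norm_smul, hx1, norm_inv, Real.norm_eq_abs, abs_abs, mul_one, inv_inv]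
      rw [smul_smul, mul_inv_cancel₀ hk0.ne', one_smul]
    have hmem : (fun i => x (k.succAbove i) / |x k|) ∈ box := by
      rw [hbox, mem_closedBall_zero_iff, pi_norm_le_iff_of_nonneg zero_le_one]
      intro i
      rw [Real.norm_eq_abs, abs_div, abs_abs, div_le_one hk0]
      exact hk _ (Finset.mem_univ _)
    refine mem_iUnion.2 ⟨k, ?_⟩
    rcases le_or_gt 0 (x k) with h | h
    · left
      rw [abs_of_nonneg h] at hkey hmem hk0
      rw [div_self hk0.ne'] at hkey
      exact ⟨_, hmem, hkey⟩
    · right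
      rw [abs_of_neg h] at hkey hmem hk0
      rw [div_neg, div_self h.ne] at hkey
      exact ⟨_, hmem, hkey⟩
  have hfacelip : ∀ k s, ∃ C, LipschitzWith C (face k s) := by
    intro k s
    have h1 : LipschitzWith 1 (fun y : Fin m → ℝ => (Fin.insertNth k s y : Fin (m + 1) → ℝ)) := by
      refine LipschitzWith.of_dist_le_mul fun y z => ?_
      rw [NNReal.coe_one, one_mul, dist_pi_le_iff dist_nonneg]
      intro j
      refine Fin.succAboveCases k ?_ (fun i => ?_) j
      · simp
      · simpa using dist_le_pi_dist y z i
    exact ⟨_, (PiLp.lipschitzWith_toLp 2 (fun _ : Fin (m + 1) => ℝ)).comp h1⟩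
  have hone : ∀ k s y, |s| = 1 → 1 ≤ ‖face k s y‖ := by
    intro k s y hs
    have := PiLp.norm_apply_le (face k s y) k
    simpa [hface, hs] using this
  have hfin : ∀ k s, |s| = 1 →
      (Measure.hausdorffMeasure (m : ℝ) : Measure (Eucl (m + 1))) (F k s '' box) < ⊤ := by
    intro k s hs
    obtain ⟨C, hC⟩ := hfacelip k s
    have hL : LipschitzWith (2 * C) (F k s) := by
      refine LipschitzWith.of_dist_le_mul fun y z => ?_
      rw [dist_eq_norm]
      refine (norm_radial_sub_le (hone k s y hs) (hone k s z hs)).trans ?_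
      have := hC.dist_le_mul y z
      rw [dist_eq_norm] at this
      push_cast
      linarith
    have hvol : (Measure.hausdorffMeasure (m : ℝ) : Measure (Fin m → ℝ)) = volume := by
      have := hausdorffMeasure_pi_real (ι := Fin m)
      rwa [Fintype.card_fin] at this
    have h := (hL.lipschitzOnWith (s := box)).hausdorffMeasure_image_le
      (d := (m : ℝ)) (by positivity)
    rw [hvol] at h
    refine lt_of_le_of_lt h (ENNReal.mul_lt_top ?_ ?_)
    · exact ENNReal.rpow_lt_top_of_nonneg (by positivity) ENNReal.coe_ne_top
    · exact (isCompact_closedBall _ _).measure_lt_top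
  refine lt_of_le_of_lt (measure_mono hcov) ?_
  refine lt_of_le_of_lt (measure_iUnion_fintype_le _ _) ?_
  refine ENNReal.sum_lt_top.2 fun k _ => ?_
  refine lt_of_le_of_lt (measure_union_le _ _) (ENNReal.add_lt_top.2 ⟨?_, ?_⟩)
  · exact hfin k 1 (by simp)
  · exact hfin k (-1) (by simp)

lemma sphMeasure_isProb {n : ℕ} (hn : 1 ≤ n) : IsProbabilityMeasure (sphMeasure n) := by
  obtain ⟨m, rfl⟩ : ∃ m, n = m + 1 := ⟨n - 1, by omega⟩
  have hd : ((m + 1 : ℕ) : ℝ) - 1 = m := by push_cast; ring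
  constructor
  rw [sphMeasure, hd, Measure.smul_apply, Measure.restrict_apply_univ, smul_eq_mul]
  exact ENNReal.inv_mul_cancel (hausdorff_sphere_pos m).ne' (hausdorff_sphere_lt_top m).ne

lemma measurableSet_uSphere (n : ℕ) : MeasurableSet (uSphere n) :=
  Metric.isClosed_sphere.measurableSet

lemma isCompact_uSphere (n : ℕ) : IsCompact (uSphere n) := isCompact_sphere _ _

lemma sphMeasure_restrict (n : ℕ) : (sphMeasure n).restrict (uSphere n) = sphMeasure n := by
  rw [sphMeasure, Measure.restrict_smul, Measure.restrict_restrict (measurableSet_uSphere n),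
    inter_self]

lemma ae_mem_uSphere (n : ℕ) : ∀ᵐ ζ ∂(sphMeasure n), ζ ∈ uSphere n := by
  rw [← sphMeasure_restrict n]
  exact ae_restrict_mem (measurableSet_uSphere n)

lemma norm_of_mem_uSphere {n : ℕ} {ζ : Eucl n} (h : ζ ∈ uSphere n) : ‖ζ‖ = 1 := by
  simpa [uSphere] using h

lemma aesm_sphere {n : ℕ} {f : Eucl n → ℂ} (hf : ContinuousOn f (uSphere n)) :
    AEStronglyMeasurable f (sphMeasure n) := by
  rw [← sphMeasure_restrict n]
  exact hf.aestronglyMeasurable (measurableSet_uSphere n)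

lemma integrable_sphere {n : ℕ} (hn : 1 ≤ n) {f : Eucl n → ℂ}
    (hf : ContinuousOn f (uSphere n)) : Integrable f (sphMeasure n) := by
  have := sphMeasure_isProb hn
  obtain ⟨C, hC⟩ := (isCompact_uSphere n).exists_bound_of_continuousOn hf
  refine Integrable.of_bound (aesm_sphere hf) C ?_
  filter_upwards [ae_mem_uSphere n] with ζ hζ using hC ζ hζ

/-- The normalized surface measure is invariant under linear isometries. -/
lemma integral_comp_isometry {n : ℕ} (R : Eucl n ≃ₗᵢ[ℝ] Eucl n) (f : Eucl n → ℂ) :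
    ∫ ζ, f (R ζ) ∂(sphMeasure n) = ∫ ζ, f ζ ∂(sphMeasure n) := by
  have h0 := R.toIsometryEquiv.measurePreserving_hausdorffMeasure ((n : ℝ) - 1)
  have hpre : R.toIsometryEquiv ⁻¹' (uSphere n) = uSphere n := by
    ext x
    simp [uSphere]
  have h1 := h0.restrict_preimage (measurableSet_uSphere n)
  rw [hpre] at h1
  have h2 := h1.integral_comp R.toIsometryEquiv.toHomeomorph.measurableEmbedding f
  simp only [sphMeasure, integral_smul_measure]
  congr 1

/-! ### Rotation invariance -/

/-- Differentiation under the integral over the sphere, for an integrand that depends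
continuously differentiably on a real parameter. -/
lemma hasDerivAt_sphere_integral {n : ℕ} (hn : 1 ≤ n) {F F' : ℝ → Eucl n → ℂ} {I : Set ℝ}
    (hI : IsOpen I) (hF : ∀ t ∈ I, ContinuousOn (F t) (uSphere n))
    (hF' : ContinuousOn (fun z : ℝ × Eucl n => F' z.1 z.2) (I ×ˢ uSphere n))
    (hd : ∀ t ∈ I, ∀ ζ ∈ uSphere n, HasDerivAt (fun t => F t ζ) (F' t ζ) t)
    {t₀ : ℝ} (ht₀ : t₀ ∈ I) :
    HasDerivAt (fun t => ∫ ζ, F t ζ ∂(sphMeasure n)) (∫ ζ, F' t₀ ζ ∂(sphMeasure n)) t₀ := by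
  have := sphMeasure_isProb hn
  obtain ⟨ε, hε, hεI⟩ := Metric.nhds_basis_closedBall.mem_iff.1 (hI.mem_nhds ht₀)
  have hK : IsCompact (closedBall t₀ ε ×ˢ uSphere n) :=
    (isCompact_closedBall _ _).prod (isCompact_uSphere n)
  obtain ⟨C, hC⟩ := hK.exists_bound_of_continuousOn
    (hF'.mono (prod_mono hεI subset_rfl))
  have hF't : ContinuousOn (F' t₀) (uSphere n) :=
    hF'.comp (f := fun ζ => (t₀, ζ)) (by fun_prop) fun ζ hζ => ⟨ht₀, hζ⟩
  refine (hasDerivAt_integral_of_dominated_loc_of_deriv_le (bound := fun _ => C)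
    (Metric.closedBall_mem_nhds t₀ hε) ?_ (integrable_sphere hn (hF t₀ ht₀))
    (aesm_sphere hF't) ?_ (integrable_const C) ?_).2
  · filter_upwards [hI.mem_nhds ht₀] with t ht using aesm_sphere (hF t ht)
  · filter_upwards [ae_mem_uSphere n] with ζ hζ t ht using hC (t, ζ) ⟨ht, hζ⟩
  · filter_upwards [ae_mem_uSphere n] with ζ hζ t ht using hd t (hεI ht) ζ hζ

/-- The rotation by the angle `t` in the plane of the `i`-th and `j`-th coordinates. -/
noncomputable def planeRot {n : ℕ} (i j : Fin n) (t : ℝ) : Eucl n →ₗ[ℝ] Eucl n where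
  toFun x := x + ((Real.cos t - 1) * x i - Real.sin t * x j) • basisV n i
    + (Real.sin t * x i + (Real.cos t - 1) * x j) • basisV n j
  map_add' x y := by simp only [PiLp.add_apply]; module
  map_smul' c x := by simp only [PiLp.smul_apply, smul_eq_mul, RingHom.id_apply]; module

lemma planeRot_apply {n : ℕ} (i j : Fin n) (t : ℝ) (x : Eucl n) :
    planeRot i j t x = x + ((Real.cos t - 1) * x i - Real.sin t * x j) • basisV n i
    + (Real.sin t * x i + (Real.cos t - 1) * x j) • basisV n j := rfl

lemma inner_basisV {n : ℕ} (x : Eucl n) (i : Fin n) : ⟪x, basisV n i⟫_ℝ = x i := by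
  simp [basisV, EuclideanSpace.inner_single_right]

lemma basisV_apply {n : ℕ} (i k : Fin n) : basisV n i k = if k = i then 1 else 0 := by
  simp [basisV]

lemma sum_smul_basisV {n : ℕ} (x : Eucl n) : ∑ i, x i • basisV n i = x := by
  ext k
  simp [basisV_apply]

lemma norm_planeRot {n : ℕ} {i j : Fin n} (hij : i ≠ j) (t : ℝ) (x : Eucl n) :
    ‖planeRot i j t x‖ = ‖x‖ := by
  have h : ∀ α β : ℝ, ‖x + α • basisV n i + β • basisV n j‖ ^ 2
      = ‖x‖ ^ 2 + 2 * α * x i + 2 * β * x j + α ^ 2 + β ^ 2 := by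
    intro α β
    rw [← real_inner_self_eq_norm_sq, ← real_inner_self_eq_norm_sq]
    have hl : ∀ (k : Fin n) (y : Eucl n), ⟪basisV n k, y⟫_ℝ = y k := fun k y => by
      rw [real_inner_comm, inner_basisV]
    simp only [inner_add_left, inner_add_right, real_inner_smul_left, real_inner_smul_right,
      inner_basisV, hl]
    simp only [basisV_apply, hij, hij.symm, if_true, if_false]
    ring
  have h2 : ‖planeRot i j t x‖ ^ 2 = ‖x‖ ^ 2 := by
    rw [planeRot_apply, h]
    have := Real.sin_sq_add_cos_sq t
    linear_combination (x i ^ 2 + x j ^ 2) * this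
  exact (sq_eq_sq₀ (norm_nonneg _) (norm_nonneg _)).1 h2

lemma integral_comp_planeRot {n : ℕ} {i j : Fin n} (hij : i ≠ j) (t : ℝ) (f : Eucl n → ℂ) :
    ∫ ζ, f (planeRot i j t ζ) ∂(sphMeasure n) = ∫ ζ, f ζ ∂(sphMeasure n) := by
  let R : Eucl n →ₗᵢ[ℝ] Eucl n := ⟨planeRot i j t, norm_planeRot hij t⟩
  exact integral_comp_isometry (R.toLinearIsometryEquiv rfl) f

/-- The rotation fields `ζᵢ∂ⱼ - ζⱼ∂ᵢ` have zero mean over the sphere: differentiate the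
rotation invariance of the surface measure at the angle `0`. -/
lemma integral_rotField {n : ℕ} (hn : 1 ≤ n) {f : Eucl n → ℂ} {U : Set (Eucl n)} (hU : IsOpen U)
    (hSU : uSphere n ⊆ U) (hf : ContDiffOn ℝ 1 f U) (i j : Fin n) :
    ∫ ζ, fderiv ℝ f ζ (ζ i • basisV n j - ζ j • basisV n i) ∂(sphMeasure n) = 0 := by
  by_cases hij : i = j
  · subst hij; simp
  set R' : ℝ → Eucl n → Eucl n := fun t x =>
    (-Real.sin t * x i - Real.cos t * x j) • basisV n i
      + (Real.cos t * x i - Real.sin t * x j) • basisV n j with hR'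
  have hmem : ∀ t, ∀ ζ ∈ uSphere n, planeRot i j t ζ ∈ uSphere n := by
    intro t ζ hζ
    simp only [uSphere, mem_sphere_zero_iff_norm, norm_planeRot hij] at hζ ⊢
    exact hζ
  have hcont : Continuous fun z : ℝ × Eucl n => planeRot i j z.1 z.2 := by
    simp only [planeRot_apply]
    fun_prop
  have hfc : ContinuousOn f (uSphere n) := hf.continuousOn.mono hSU
  have hdfc : ContinuousOn (fderiv ℝ f) (uSphere n) :=
    (hf.continuousOn_fderiv_of_isOpen hU le_rfl).mono hSU
  have hder := hasDerivAt_sphere_integral hn (F := fun t ζ => f (planeRot i j t ζ))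
    (F' := fun t ζ => fderiv ℝ f (planeRot i j t ζ) (R' t ζ)) isOpen_univ
    (fun t _ => hfc.comp (hcont.comp (Continuous.prodMk_right t)).continuousOn (hmem t))
    (by
      refine ContinuousOn.clm_apply ?_ ?_
      · exact hdfc.comp hcont.continuousOn fun z hz => hmem z.1 z.2 hz.2
      · refine Continuous.continuousOn ?_
        simp only [hR']
        fun_prop)
    (by
      intro t _ ζ hζ
      have h1 : HasFDerivAt f (fderiv ℝ f (planeRot i j t ζ)) (planeRot i j t ζ) :=
        ((hf.contDiffAt (hU.mem_nhds (hSU (hmem t ζ hζ)))).differentiableAt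
          one_ne_zero).hasFDerivAt
      have h2 : HasDerivAt (fun t => planeRot i j t ζ) (R' t ζ) t := by
        simp only [planeRot_apply, hR']
        have hs := Real.hasDerivAt_sin t
        have hc := Real.hasDerivAt_cos t
        have ha := (((hc.sub_const 1).mul_const (ζ i)).sub (hs.mul_const (ζ j))).smul_const
          (basisV n i)
        have hb := ((hs.mul_const (ζ i)).add ((hc.sub_const 1).mul_const (ζ j))).smul_const
          (basisV n j)
        refine ((ha.const_add ζ).add hb).congr_deriv ?_
        module
      exact h1.comp_hasDerivAt t h2)
    (mem_univ (0 : ℝ))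
  have hconst : (fun t => ∫ ζ, f (planeRot i j t ζ) ∂(sphMeasure n))
      = fun _ => ∫ ζ, f ζ ∂(sphMeasure n) := by
    funext t
    exact integral_comp_planeRot hij t f
  rw [hconst] at hder
  have h0 := hder.unique (hasDerivAt_const _ _)
  rw [← h0]
  congr 1
  funext ζ
  have e1 : planeRot i j 0 ζ = ζ := by simp [planeRot_apply]
  have e2 : R' 0 ζ = ζ i • basisV n j - ζ j • basisV n i := by
    simp only [hR', Real.sin_zero, Real.cos_zero]
    module
  simp only [e1, e2]

/-! ### Flux of divergence-free fields -/

lemma smul_mem_ball_of_abs_lt {n : ℕ} {a r : ℝ} {ζ : Eucl n} (hζ : ζ ∈ uSphere n)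
    (hr : |r| < a) : r • ζ ∈ Metric.ball (0 : Eucl n) a := by
  rw [mem_ball_zero_iff, norm_smul, norm_of_mem_uSphere hζ, mul_one]
  exact hr

/-- The identity `(n-1) G(r) + r G'(r) = 0` for the flux density
`G(r) = ∫ ∑ⱼ ζⱼ Vⱼ(rζ) dσ` of a divergence-free field: it is the sum over all `i, j` of the
vanishing means of `(ζᵢ∂ⱼ - ζⱼ∂ᵢ)(ζᵢ Vⱼ(rζ))`. -/
lemma flux_ode {n : ℕ} (hn : 1 ≤ n) {a : ℝ} (ha : 1 < a) {V : Fin n → Eucl n → ℂ}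
    (hV : ∀ j, ContDiffOn ℝ 1 (V j) (Metric.ball 0 a))
    (hdiv : ∀ x ∈ Metric.ball (0 : Eucl n) a, ∑ j, fderiv ℝ (V j) x (basisV n j) = 0)
    {r : ℝ} (hr : r ∈ Icc (0 : ℝ) 1) :
    ((n : ℝ) - 1) • ∫ ζ, ∑ j, ζ j • V j (r • ζ) ∂(sphMeasure n)
      + r • ∫ ζ, ∑ j, ζ j • fderiv ℝ (V j) (r • ζ) ζ ∂(sphMeasure n) = 0 := by
  have hU : IsOpen (Metric.ball (0 : Eucl n) a) := isOpen_ball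
  have hSU : uSphere n ⊆ Metric.ball 0 a := fun ζ hζ => by
    rw [mem_ball_zero_iff, norm_of_mem_uSphere hζ]; exact ha
  have hrU : ∀ ζ ∈ Metric.ball (0 : Eucl n) a, r • ζ ∈ Metric.ball (0 : Eucl n) a := by
    intro ζ hζ
    rw [mem_ball_zero_iff] at hζ ⊢
    rw [norm_smul, Real.norm_eq_abs, abs_of_nonneg hr.1]
    nlinarith [hr.1, hr.2, norm_nonneg ζ]
  have hf : ∀ i j : Fin n, ContDiffOn ℝ 1 (fun ζ : Eucl n => ζ i • V j (r • ζ))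
      (Metric.ball 0 a) := by
    intro i j
    have h1 : ContDiffOn ℝ 1 (fun ζ : Eucl n => ζ i) (Metric.ball 0 a) :=
      (EuclideanSpace.proj i : Eucl n →L[ℝ] ℝ).contDiff.contDiffOn
    have h2 : ContDiffOn ℝ 1 (fun ζ : Eucl n => V j (r • ζ)) (Metric.ball 0 a) :=
      (hV j).comp (contDiff_const_smul r).contDiffOn hrU
    exact h1.smul h2
  have hfd : ∀ i j : Fin n, ∀ ζ ∈ uSphere n, ∀ v : Eucl n,
      fderiv ℝ (fun ζ : Eucl n => ζ i • V j (r • ζ)) ζ v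
        = ζ i • (r • fderiv ℝ (V j) (r • ζ) v) + v i • V j (r • ζ) := by
    intro i j ζ hζ v
    have h1 : HasFDerivAt (V j) (fderiv ℝ (V j) (r • ζ)) (r • ζ) :=
      (((hV j).contDiffAt (hU.mem_nhds (hrU _ (hSU hζ)))).differentiableAt
        one_ne_zero).hasFDerivAt
    have h2 : HasFDerivAt (fun z : Eucl n => r • z) (r • ContinuousLinearMap.id ℝ (Eucl n)) ζ :=
      (hasFDerivAt_id ζ).const_smul r
    have h3 := h1.comp ζ h2
    have h4 : HasFDerivAt (fun z : Eucl n => z i) (EuclideanSpace.proj i : Eucl n →L[ℝ] ℝ) ζ :=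
      (EuclideanSpace.proj i : Eucl n →L[ℝ] ℝ).hasFDerivAt
    have h5 := (h4.smul h3).fderiv
    have h6 : (fun ζ : Eucl n => ζ i • V j (r • ζ))
      = (fun z : Eucl n => z i) • (V j ∘ fun z : Eucl n => r • z) := rfl
    rw [h6, h5]
    simp
  have hcV : ∀ j, ContinuousOn (fun ζ : Eucl n => V j (r • ζ)) (uSphere n) := fun j =>
    (hV j).continuousOn.comp (by fun_prop) fun ζ hζ => hrU _ (hSU hζ)
  have hcD : ∀ j, ContinuousOn (fun ζ : Eucl n => fderiv ℝ (V j) (r • ζ)) (uSphere n) := fun j =>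
    ((hV j).continuousOn_fderiv_of_isOpen hU le_rfl).comp (by fun_prop)
      fun ζ hζ => hrU _ (hSU hζ)
  have hzero : ∀ i j, ∫ ζ, fderiv ℝ (fun ζ : Eucl n => ζ i • V j (r • ζ)) ζ
      (ζ i • basisV n j - ζ j • basisV n i) ∂(sphMeasure n) = 0 := fun i j =>
    integral_rotField hn hU hSU (hf i j) i j
  have hInt : ∀ i j, Integrable (fun ζ => fderiv ℝ (fun ζ : Eucl n => ζ i • V j (r • ζ)) ζ
      (ζ i • basisV n j - ζ j • basisV n i)) (sphMeasure n) := by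
    intro i j
    refine integrable_sphere hn ?_
    refine ContinuousOn.clm_apply ?_ (by fun_prop)
    exact ((hf i j).continuousOn_fderiv_of_isOpen hU le_rfl).mono hSU
  have hsum : ∫ ζ, ∑ i, ∑ j, fderiv ℝ (fun ζ : Eucl n => ζ i • V j (r • ζ)) ζ
      (ζ i • basisV n j - ζ j • basisV n i) ∂(sphMeasure n) = 0 := by
    rw [integral_finsetSum _ fun i _ => integrable_finsetSum _ fun j _ => hInt i j]
    refine Finset.sum_eq_zero fun i _ => ?_
    rw [integral_finsetSum _ fun j _ => hInt i j]
    exact Finset.sum_eq_zero fun j _ => hzero i j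
  have hI1 : Integrable (fun ζ => ∑ j, ζ j • V j (r • ζ)) (sphMeasure n) := by
    refine integrable_sphere hn (continuousOn_finsetSum _ fun j _ => ?_)
    exact ContinuousOn.smul (f := fun ζ : Eucl n => ζ j) (by fun_prop) (hcV j)
  have hI2 : Integrable (fun ζ => ∑ j, ζ j • fderiv ℝ (V j) (r • ζ) ζ) (sphMeasure n) := by
    refine integrable_sphere hn (continuousOn_finsetSum _ fun j _ => ?_)
    exact ContinuousOn.smul (f := fun ζ : Eucl n => ζ j) (by fun_prop) ((hcD j).clm_apply continuousOn_id)
  have hadd := integral_add (hI1.smul ((n : ℝ) - 1)) (hI2.smul r)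
  simp only [Pi.smul_apply] at hadd
  rw [← integral_smul, ← integral_smul, ← hadd, ← neg_eq_zero, ← integral_neg, ← hsum]
  refine integral_congr_ae ?_
  filter_upwards [ae_mem_uSphere n] with ζ hζ
  have hterm : ∀ i j, fderiv ℝ (fun ζ : Eucl n => ζ i • V j (r • ζ)) ζ
      (ζ i • basisV n j - ζ j • basisV n i)
      = (ζ i ^ 2) • (r • fderiv ℝ (V j) (r • ζ) (basisV n j))
        - r • (ζ j • (ζ i • fderiv ℝ (V j) (r • ζ) (basisV n i)))
        + (if i = j then ζ i • V j (r • ζ) else 0) - ζ j • V j (r • ζ) := by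
    intro i j
    rw [hfd i j ζ hζ, map_sub, map_smul, map_smul]
    simp only [PiLp.sub_apply, PiLp.smul_apply, basisV_apply, smul_eq_mul, if_true, mul_one]
    split_ifs
    · module
    · module
  have hD : ∀ j, ∑ i, ζ i • fderiv ℝ (V j) (r • ζ) (basisV n i) = fderiv ℝ (V j) (r • ζ) ζ := by
    intro j
    have h := congrArg (fderiv ℝ (V j) (r • ζ)) (sum_smul_basisV ζ)
    simpa only [map_sum, map_smul] using h
  simp only [hterm, Finset.sum_add_distrib, Finset.sum_sub_distrib]
  have s1 : ∑ i, ∑ j, (ζ i ^ 2) • (r • fderiv ℝ (V j) (r • ζ) (basisV n j)) = 0 := by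
    refine Finset.sum_eq_zero fun i _ => ?_
    rw [← Finset.smul_sum, ← Finset.smul_sum, hdiv _ (hrU _ (hSU hζ))]
    simp
  have s2 : ∑ i, ∑ j, r • (ζ j • (ζ i • fderiv ℝ (V j) (r • ζ) (basisV n i)))
      = r • ∑ j, ζ j • fderiv ℝ (V j) (r • ζ) ζ := by
    rw [Finset.sum_comm, Finset.smul_sum]
    refine Finset.sum_congr rfl fun j _ => ?_
    rw [← hD j, Finset.smul_sum, Finset.smul_sum]
  have s3 : ∑ i, ∑ j, (if i = j then ζ i • V j (r • ζ) else 0) = ∑ j, ζ j • V j (r • ζ) := by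
    simp
  rw [s1, s2, s3]
  simp only [Finset.sum_const, Finset.card_univ, Fintype.card_fin]
  rw [← Nat.cast_smul_eq_nsmul ℝ]
  module

/-- A divergence-free `C¹` field on a ball of radius larger than `1` has zero flux through
the unit sphere. -/
lemma flux_eq_zero {n : ℕ} (hn : 2 ≤ n) {a : ℝ} (ha : 1 < a) {V : Fin n → Eucl n → ℂ}
    (hV : ∀ j, ContDiffOn ℝ 1 (V j) (Metric.ball 0 a))
    (hdiv : ∀ x ∈ Metric.ball (0 : Eucl n) a, ∑ j, fderiv ℝ (V j) x (basisV n j) = 0) :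
    ∫ ζ, ∑ j, ζ j • V j ζ ∂(sphMeasure n) = 0 := by
  have hn1 : 1 ≤ n := by omega
  have hU : IsOpen (Metric.ball (0 : Eucl n) a) := isOpen_ball
  have hIo : IsOpen {r : ℝ | |r| < a} := isOpen_lt continuous_abs continuous_const
  set G : ℝ → ℂ := fun r => ∫ ζ, ∑ j, ζ j • V j (r • ζ) ∂(sphMeasure n) with hG
  set G' : ℝ → ℂ := fun r => ∫ ζ, ∑ j, ζ j • fderiv ℝ (V j) (r • ζ) ζ ∂(sphMeasure n) with hG'
  have hGd : ∀ r, |r| < a → HasDerivAt G (G' r) r := by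
    intro r hr
    refine hasDerivAt_sphere_integral hn1 (F := fun r ζ => ∑ j, ζ j • V j (r • ζ))
      (F' := fun r ζ => ∑ j, ζ j • fderiv ℝ (V j) (r • ζ) ζ) hIo ?_ ?_ ?_ hr
    · intro t ht
      refine continuousOn_finsetSum _ fun j _ =>
        ContinuousOn.smul (f := fun ζ : Eucl n => ζ j) (by fun_prop) ?_
      exact (hV j).continuousOn.comp (by fun_prop) fun ζ hζ => smul_mem_ball_of_abs_lt hζ ht
    · refine continuousOn_finsetSum _ fun j _ =>
        ContinuousOn.smul (f := fun z : ℝ × Eucl n => z.2 j) (by fun_prop) ?_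
      refine ContinuousOn.clm_apply ?_ (by fun_prop)
      exact ((hV j).continuousOn_fderiv_of_isOpen hU le_rfl).comp (by fun_prop)
        fun z hz => smul_mem_ball_of_abs_lt hz.2 hz.1
    · intro t ht ζ hζ
      refine HasDerivAt.fun_sum fun j _ => ?_
      have h1 : HasFDerivAt (V j) (fderiv ℝ (V j) (t • ζ)) (t • ζ) :=
        (((hV j).contDiffAt (hU.mem_nhds (smul_mem_ball_of_abs_lt hζ ht))).differentiableAt
          one_ne_zero).hasFDerivAt
      have h2 : HasDerivAt (fun t : ℝ => t • ζ) ζ t := by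
        simpa using (hasDerivAt_id t).smul_const ζ
      exact (h1.comp_hasDerivAt t h2).const_smul (ζ j)
  set K : ℝ → ℂ := fun r => r ^ (n - 1) • G r with hK
  have hKd : ∀ r, |r| < a → HasDerivAt K (r ^ (n - 1) • G' r +
      (((n - 1 : ℕ) : ℝ) * r ^ (n - 1 - 1)) • G r) r := fun r hr =>
    (hasDerivAt_pow (n - 1) r).fun_smul (hGd r hr)
  have hKd0 : ∀ r ∈ Icc (0 : ℝ) 1, HasDerivAt K 0 r := by
    intro r hr
    have h := flux_ode hn1 ha hV hdiv hr
    refine (hKd r (by rw [abs_of_nonneg hr.1]; linarith [hr.2])).congr_deriv ?_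
    obtain ⟨m, rfl⟩ : ∃ m, n = m + 2 := ⟨n - 2, by omega⟩
    have e1 : m + 2 - 1 = m + 1 := by omega
    have e2 : m + 2 - 1 - 1 = m := by omega
    rw [e2, e1]
    calc _ = r ^ m • ((((m + 2 : ℕ) : ℝ) - 1) • G r + r • G' r) := by
          push_cast; module
      _ = 0 := by rw [h, smul_zero]
  have hconst := constant_of_has_deriv_right_zero (f := K) (a := 0) (b := 1)
    (fun r hr => (hKd0 r hr).continuousAt.continuousWithinAt)
    (fun r hr => (hKd0 r ⟨hr.1, hr.2.le⟩).hasDerivWithinAt) 1 ⟨zero_le_one, le_rfl⟩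
  have hne : n - 1 ≠ 0 := by omega
  simpa [hK, hG, zero_pow hne] using hconst

/-! ### Green's identity -/

lemma lap_eq {n : ℕ} (f : Eucl n → ℂ) (x : Eucl n) :
    lap f x = ∑ i, fderiv ℝ (fderiv ℝ f) x (basisV n i) (basisV n i) := by
  simp [lap, iteratedFDeriv_two_apply]

lemma HarmOn.mono {n : ℕ} {f : Eucl n → ℂ} {s t : Set (Eucl n)} (h : HarmOn f s) (hts : t ⊆ s) :
    HarmOn f t := ⟨h.1.mono hts, fun x hx => h.2 x (hts hx)⟩

lemma HarmOn.contDiffOn_fderiv {n : ℕ} {f : Eucl n → ℂ} {s : Set (Eucl n)} (h : HarmOn f s)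
    (hs : IsOpen s) : ContDiffOn ℝ 1 (fderiv ℝ f) s :=
  h.1.fderiv_of_isOpen hs (by norm_num)

lemma HarmOn.hasFDerivAt {n : ℕ} {f : Eucl n → ℂ} {s : Set (Eucl n)} (h : HarmOn f s)
    (hs : IsOpen s) {x : Eucl n} (hx : x ∈ s) : HasFDerivAt f (fderiv ℝ f x) x :=
  ((h.1.contDiffAt (hs.mem_nhds hx)).differentiableAt two_ne_zero).hasFDerivAt

lemma HarmOn.hasFDerivAt_fderiv {n : ℕ} {f : Eucl n → ℂ} {s : Set (Eucl n)} (h : HarmOn f s)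
    (hs : IsOpen s) {x : Eucl n} (hx : x ∈ s) :
    HasFDerivAt (fderiv ℝ f) (fderiv ℝ (fderiv ℝ f) x) x :=
  (((h.contDiffOn_fderiv hs).contDiffAt (hs.mem_nhds hx)).differentiableAt
    one_ne_zero).hasFDerivAt

lemma smul_mem_ball {n : ℕ} {a c t : ℝ} (ht : 0 < t) (hc : t * c ≤ a) {x : Eucl n}
    (hx : x ∈ Metric.ball (0 : Eucl n) c) : t • x ∈ Metric.ball (0 : Eucl n) a := by
  rw [mem_ball_zero_iff] at hx ⊢
  rw [norm_smul, Real.norm_eq_abs, abs_of_pos ht]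
  nlinarith

/-- Dilations preserve harmonicity. -/
lemma HarmOn.comp_smul {n : ℕ} {f : Eucl n → ℂ} {a c t : ℝ} (h : HarmOn f (Metric.ball 0 a))
    (ht : 0 < t) (hc : t * c ≤ a) : HarmOn (fun x => f (t • x)) (Metric.ball 0 c) := by
  refine ⟨h.1.comp (contDiff_const_smul t).contDiffOn fun x hx => smul_mem_ball ht hc hx, ?_⟩
  intro x hx
  have h1 : fderiv ℝ (fun x => f (t • x)) = fun x => t • fderiv ℝ f (t • x) := by
    funext z
    exact fderiv_comp_smul t
  have h2 : HasFDerivAt (fun x => t • fderiv ℝ f (t • x))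
      (t • (fderiv ℝ (fderiv ℝ f) (t • x)).comp (t • ContinuousLinearMap.id ℝ (Eucl n))) x :=
    ((h.hasFDerivAt_fderiv isOpen_ball (smul_mem_ball ht hc hx)).comp x
      ((hasFDerivAt_id x).const_smul t)).const_smul t
  have h3 := h.2 _ (smul_mem_ball ht hc hx)
  rw [lap_eq] at h3 ⊢
  rw [h1, h2.fderiv]
  simp only [smul_apply, ContinuousLinearMap.comp_apply,
    ContinuousLinearMap.id_apply, map_smul]
  rw [← Finset.smul_sum, ← Finset.smul_sum, h3, smul_zero, smul_zero]

/-- Green's identity on the unit sphere for two harmonic functions. -/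
lemma green_sphere {n : ℕ} (hn : 2 ≤ n) {a : ℝ} (ha : 1 < a) {u v : Eucl n → ℂ}
    (hu : HarmOn u (Metric.ball 0 a)) (hv : HarmOn v (Metric.ball 0 a)) :
    ∫ ζ, (fderiv ℝ u ζ ζ * v ζ - u ζ * fderiv ℝ v ζ ζ) ∂(sphMeasure n) = 0 := by
  have hU : IsOpen (Metric.ball (0 : Eucl n) a) := isOpen_ball
  have hflux := flux_eq_zero hn ha
    (V := fun j x => fderiv ℝ u x (basisV n j) * v x - u x * fderiv ℝ v x (basisV n j))
    (fun j => by
      have h1 := (hu.contDiffOn_fderiv hU).clm_apply (contDiffOn_const (c := basisV n j))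
      have h2 := (hv.contDiffOn_fderiv hU).clm_apply (contDiffOn_const (c := basisV n j))
      exact (h1.mul (hv.1.of_le (by norm_num))).sub ((hu.1.of_le (by norm_num)).mul h2))
    (fun x hx => by
      have hu1 := hu.hasFDerivAt hU hx
      have hv1 := hv.hasFDerivAt hU hx
      have hu2 := hu.hasFDerivAt_fderiv hU hx
      have hv2 := hv.hasFDerivAt_fderiv hU hx
      have hterm : ∀ j, fderiv ℝ (fun x => fderiv ℝ u x (basisV n j) * v x
          - u x * fderiv ℝ v x (basisV n j)) x (basisV n j)
          = fderiv ℝ (fderiv ℝ u) x (basisV n j) (basisV n j) * v x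
            - u x * fderiv ℝ (fderiv ℝ v) x (basisV n j) (basisV n j) := by
        intro j
        have hu3 := hu2.clm_apply (hasFDerivAt_const (basisV n j) x)
        have hv3 := hv2.clm_apply (hasFDerivAt_const (basisV n j) x)
        have h := ((hu3.fun_mul hv1).fun_sub (hu1.fun_mul hv3)).fderiv
        rw [h]
        simp
        ring
      simp only [hterm]
      rw [Finset.sum_sub_distrib, ← Finset.sum_mul, ← Finset.mul_sum, ← lap_eq, ← lap_eq,
        hu.2 x hx, hv.2 x hx]
      simp)
  rw [← hflux]
  congr 1
  funext ζ
  have hD : ∀ w : Eucl n → ℂ, fderiv ℝ w ζ ζ = ∑ j, ζ j • fderiv ℝ w ζ (basisV n j) := by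
    intro w
    have h := congrArg (fderiv ℝ w ζ) (sum_smul_basisV ζ)
    simpa only [map_sum, map_smul] using h.symm
  rw [hD u, hD v, Finset.sum_mul, Finset.mul_sum, ← Finset.sum_sub_distrib]
  refine Finset.sum_congr rfl fun j _ => ?_
  simp only [smul_sub, smul_mul_assoc, mul_smul_comm]

/-- For harmonic `u` and `v`, the integral of `u(tζ) v(t⁻¹ζ)` over the sphere does not depend
on `t`. -/
lemma pairing_const {n : ℕ} (hn : 2 ≤ n) {a b : ℝ} (hb : 0 < b) {u v : Eucl n → ℂ}
    (hu : HarmOn u (Metric.ball 0 a)) (hv : HarmOn v (Metric.ball 0 b)) {t s : ℝ}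
    (ht : t ∈ Ioo b⁻¹ a) (hs : s ∈ Ioo b⁻¹ a) :
    ∫ ζ, u (t • ζ) * v (t⁻¹ • ζ) ∂(sphMeasure n)
      = ∫ ζ, u (s • ζ) * v (s⁻¹ • ζ) ∂(sphMeasure n) := by
  have hn1 : 1 ≤ n := by omega
  have hpos : ∀ r ∈ Ioo b⁻¹ a, 0 < r := fun r hr => (inv_pos.2 hb).trans hr.1
  have hinv : ∀ r ∈ Ioo b⁻¹ a, r⁻¹ < b := fun r hr => (inv_lt_comm₀ hb (hpos r hr)).1 hr.1
  have hm1 : ∀ r ∈ Ioo b⁻¹ a, ∀ ζ ∈ uSphere n, r • ζ ∈ Metric.ball (0 : Eucl n) a :=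
    fun r hr ζ hζ => smul_mem_ball_of_abs_lt hζ (by rw [abs_of_pos (hpos r hr)]; exact hr.2)
  have hm2 : ∀ r ∈ Ioo b⁻¹ a, ∀ ζ ∈ uSphere n, r⁻¹ • ζ ∈ Metric.ball (0 : Eucl n) b :=
    fun r hr ζ hζ => smul_mem_ball_of_abs_lt hζ
      (by rw [abs_of_pos (inv_pos.2 (hpos r hr))]; exact hinv r hr)
  have hder : ∀ r ∈ Ioo b⁻¹ a,
      HasDerivAt (fun t => ∫ ζ, u (t • ζ) * v (t⁻¹ • ζ) ∂(sphMeasure n)) 0 r := by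
    intro r hr
    have hr0 := hpos r hr
    have hci : ContinuousOn (fun z : ℝ × Eucl n => z.1⁻¹ • z.2) (Ioo b⁻¹ a ×ˢ uSphere n) :=
      (continuousOn_fst.inv₀ fun z hz => (hpos z.1 hz.1).ne').smul continuousOn_snd
    have hcs : ContinuousOn (fun z : ℝ × Eucl n => z.1 • z.2) (Ioo b⁻¹ a ×ˢ uSphere n) := by
      fun_prop
    have h := hasDerivAt_sphere_integral hn1 (I := Ioo b⁻¹ a)
      (F := fun t ζ => u (t • ζ) * v (t⁻¹ • ζ))
      (F' := fun t ζ => fderiv ℝ u (t • ζ) ζ * v (t⁻¹ • ζ)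
        + u (t • ζ) * fderiv ℝ v (t⁻¹ • ζ) (-(t ^ 2)⁻¹ • ζ)) isOpen_Ioo
      (fun t ht => (hu.1.continuousOn.comp (by fun_prop) (hm1 t ht)).mul
        (hv.1.continuousOn.comp (by fun_prop) (hm2 t ht)))
      (by
        have c1 := hu.1.continuousOn.comp hcs fun z hz => hm1 z.1 hz.1 z.2 hz.2
        have c2 := hv.1.continuousOn.comp hci fun z hz => hm2 z.1 hz.1 z.2 hz.2
        have c3 := (hu.contDiffOn_fderiv isOpen_ball).continuousOn.comp hcs
          fun z hz => hm1 z.1 hz.1 z.2 hz.2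
        have c4 := (hv.contDiffOn_fderiv isOpen_ball).continuousOn.comp hci
          fun z hz => hm2 z.1 hz.1 z.2 hz.2
        have c5 : ContinuousOn (fun z : ℝ × Eucl n => -(z.1 ^ 2)⁻¹ • z.2)
            (Ioo b⁻¹ a ×ˢ uSphere n) :=
          (((continuousOn_fst.pow 2).inv₀ fun z hz => pow_ne_zero 2 (hpos z.1 hz.1).ne').neg).smul
            continuousOn_snd
        exact ((c3.clm_apply continuousOn_snd).mul c2).add (c1.mul (c4.clm_apply c5)))
      (by
        intro t ht ζ hζ
        have d1 : HasDerivAt (fun t : ℝ => t • ζ) ζ t := by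
          simpa using (hasDerivAt_id t).smul_const ζ
        have d2 : HasDerivAt (fun t : ℝ => t⁻¹ • ζ) (-(t ^ 2)⁻¹ • ζ) t :=
          (hasDerivAt_inv (hpos t ht).ne').smul_const ζ
        exact ((hu.hasFDerivAt isOpen_ball (hm1 t ht ζ hζ)).comp_hasDerivAt t d1).mul
          ((hv.hasFDerivAt isOpen_ball (hm2 t ht ζ hζ)).comp_hasDerivAt t d2))
      hr
    refine h.congr_deriv ?_
    have hc : 1 < min (a / r) (b * r) := by
      refine lt_min ((one_lt_div hr0).2 hr.2) ?_
      have := mul_lt_mul_of_pos_left hr.1 hb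
      rwa [mul_inv_cancel₀ hb.ne'] at this
    have hu' := hu.comp_smul (c := min (a / r) (b * r)) hr0
      ((mul_le_mul_of_nonneg_left (min_le_left _ _) hr0.le).trans
        (by rw [mul_div_cancel₀ _ hr0.ne']))
    have hv' := hv.comp_smul (c := min (a / r) (b * r)) (inv_pos.2 hr0)
      ((mul_le_mul_of_nonneg_left (min_le_right _ _) (inv_pos.2 hr0).le).trans
        (by field_simp; exact le_rfl))
    have hg := green_sphere hn hc hu' hv'
    have key : ∀ ζ : Eucl n, fderiv ℝ u (r • ζ) ζ * v (r⁻¹ • ζ)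
        + u (r • ζ) * fderiv ℝ v (r⁻¹ • ζ) (-(r ^ 2)⁻¹ • ζ)
        = r⁻¹ • (fderiv ℝ (fun x => u (r • x)) ζ ζ * v (r⁻¹ • ζ)
          - u (r • ζ) * fderiv ℝ (fun x => v (r⁻¹ • x)) ζ ζ) := by
      intro ζ
      rw [fderiv_comp_smul, fderiv_comp_smul, map_smul]
      simp only [smul_apply, smul_sub, smul_mul_assoc, mul_smul_comm,
        smul_smul, inv_mul_cancel₀ hr0.ne', one_smul]
      rw [neg_smul, ← sub_eq_add_neg, pow_two, mul_inv]
    simp only [key]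
    rw [integral_smul, hg, smul_zero]
  refine IsOpen.is_const_of_deriv_eq_zero isOpen_Ioo isPreconnected_Ioo
    (fun r hr => (hder r hr).differentiableAt.differentiableWithinAt)
    (fun r hr => (hder r hr).deriv) ht hs

/-! ### A family of harmonic kernels -/

/-- The quadratic form `1 - 2⟨w,x⟩ + |w|²|x|²`, which is `|w|²|x - w*|²` for the reflected
point `w* = w/|w|²` when `w ≠ 0`. -/
noncomputable def brk {n : ℕ} (w x : Eucl n) : ℝ := 1 - 2 * ⟪w, x⟫_ℝ + ‖w‖ ^ 2 * ‖x‖ ^ 2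

/-- The quotient of the quadratic function `q₀ + ⟨q₁,x⟩ + q₂|x|²` by the `n/2`-th power of
`brk w`. -/
noncomputable def quadKern {n : ℕ} (q₀ q₂ : ℝ) (q₁ w x : Eucl n) : ℝ :=
  (q₀ + ⟪q₁, x⟫_ℝ + q₂ * ‖x‖ ^ 2) * brk w x ^ (-((n : ℝ) / 2))

lemma brk_pos {n : ℕ} {w x : Eucl n} (h : ‖w‖ * ‖x‖ < 1) : 0 < brk w x := by
  have := real_inner_le_norm w x
  unfold brk
  nlinarith

lemma brk_comm {n : ℕ} (w x : Eucl n) : brk w x = brk x w := by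
  unfold brk; rw [real_inner_comm]; ring

lemma brk_eq {n : ℕ} (w x : Eucl n) :
    brk w x = ‖x - w‖ ^ 2 + (1 - ‖x‖ ^ 2) * (1 - ‖w‖ ^ 2) := by
  rw [@norm_sub_sq_real, real_inner_comm]; unfold brk; ring

lemma hasFDerivAt_quad {n : ℕ} (c₀ c₂ : ℝ) (c₁ x : Eucl n) :
    HasFDerivAt (fun x => c₀ + ⟪c₁, x⟫_ℝ + c₂ * ‖x‖ ^ 2)
      (innerSL ℝ c₁ + c₂ • ((2 : ℝ) • innerSL ℝ x)) x := by
  have h1 : HasFDerivAt (fun x => ⟪c₁, x⟫_ℝ) (innerSL ℝ c₁) x := (innerSL ℝ c₁).hasFDerivAt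
  have h2 : HasFDerivAt (fun x : Eucl n => ‖x‖ ^ 2) ((2 : ℝ) • innerSL ℝ x) x := by
    have := (hasStrictFDerivAt_norm_sq x).hasFDerivAt
    rwa [ofNat_smul_eq_nsmul ℝ 2 (innerSL ℝ x)]
  exact (h1.const_add c₀).add (h2.const_mul c₂)

lemma brk_eq_quad {n : ℕ} (w : Eucl n) :
    brk w = fun x => 1 + ⟪(-2 : ℝ) • w, x⟫_ℝ + ‖w‖ ^ 2 * ‖x‖ ^ 2 := by
  funext x
  rw [brk, real_inner_smul_left]; ring

lemma hasFDerivAt_brk_rpow {n : ℕ} (w x : Eucl n) (h : 0 < brk w x) (p : ℝ) :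
    HasFDerivAt (fun x => brk w x ^ p) ((p * brk w x ^ (p - 1)) •
      (innerSL ℝ ((-2 : ℝ) • w) + ‖w‖ ^ 2 • ((2 : ℝ) • innerSL ℝ x))) x := by
  have h1 := hasFDerivAt_quad 1 (‖w‖ ^ 2) ((-2 : ℝ) • w) x
  rw [← brk_eq_quad] at h1
  exact h1.rpow_const (Or.inl h.ne')

lemma contDiff_quad {n : ℕ} (c₀ c₂ : ℝ) (c₁ : Eucl n) :
    ContDiff ℝ 2 (fun x : Eucl n => c₀ + ⟪c₁, x⟫_ℝ + c₂ * ‖x‖ ^ 2) :=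
  (contDiff_const.add (innerSL ℝ c₁).contDiff).add (contDiff_const.mul (contDiff_norm_sq ℝ))

lemma contDiffAt_quadKern {n : ℕ} (q₀ q₂ : ℝ) (q₁ w x : Eucl n) (h : 0 < brk w x) :
    ContDiffAt ℝ 2 (quadKern q₀ q₂ q₁ w) x := by
  have h1 : ContDiffAt ℝ 2 (brk w) x := by
    rw [brk_eq_quad]; exact (contDiff_quad _ _ _).contDiffAt
  exact (contDiff_quad q₀ q₂ q₁).contDiffAt.mul (h1.rpow_const_of_ne h.ne')

lemma continuous_brk {n : ℕ} (w : Eucl n) : Continuous (brk w) := by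
  rw [brk_eq_quad]; exact (contDiff_quad _ _ _).continuous

/-- `quadKern` is harmonic as soon as its numerator vanishes at the pole `w/|w|²` (or at
infinity, when `w = 0`). -/
lemma quadKern_harmOn {n : ℕ} {q₀ q₂ : ℝ} {q₁ w : Eucl n} {s : Set (Eucl n)}
    (hs : ∀ x ∈ s, ‖w‖ * ‖x‖ < 1) (hq : q₂ + ⟪q₁, w⟫_ℝ + ‖w‖ ^ 2 * q₀ = 0) :
    HarmOn (fun x => (quadKern q₀ q₂ q₁ w x : ℂ)) s := by
  refine ⟨fun x hx => ?_, fun x hx => ?_⟩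
  · exact (Complex.ofRealCLM.contDiff.contDiffAt.comp x
      (contDiffAt_quadKern q₀ q₂ q₁ w x (brk_pos (hs x hx)))).contDiffWithinAt
  have hQ : 0 < brk w x := brk_pos (hs x hx)
  set m : ℝ := -((n : ℝ) / 2) with hm
  -- the `i`-th partial derivative
  set g : Fin n → Eucl n → ℝ := fun i z =>
    (q₀ + ⟪q₁, z⟫_ℝ + q₂ * ‖z‖ ^ 2) * (m * brk w z ^ (m - 1) * (-2 * w i + ‖w‖ ^ 2 * (2 * z i)))
      + brk w z ^ m * (q₁ i + q₂ * (2 * z i)) with hg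
  have h1 : ∀ i, (fun z => fderiv ℝ (fun x => (quadKern q₀ q₂ q₁ w x : ℂ)) z (basisV n i))
      =ᶠ[𝓝 x] fun z => (g i z : ℂ) := by
    intro i
    filter_upwards [(continuous_brk w).continuousAt.eventually (lt_mem_nhds hQ)] with z hz
    have ha := (hasFDerivAt_quad q₀ q₂ q₁ z).fun_mul (hasFDerivAt_brk_rpow w z hz m)
    have hb := (Complex.ofRealCLM.hasFDerivAt.comp z ha).fderiv
    have hc : (fun x => (quadKern q₀ q₂ q₁ w x : ℂ))
      = Complex.ofRealCLM ∘ fun x => (q₀ + ⟪q₁, x⟫_ℝ + q₂ * ‖x‖ ^ 2) * brk w x ^ m := rfl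
    rw [hc, hb]
    simp [hg, inner_basisV]
    ring
  set val : Fin n → ℝ := fun i =>
    (q₁ i + q₂ * (2 * x i)) * (m * brk w x ^ (m - 1) * (-2 * w i + ‖w‖ ^ 2 * (2 * x i)))
    + (q₀ + ⟪q₁, x⟫_ℝ + q₂ * ‖x‖ ^ 2) *
      (m * ((m - 1) * brk w x ^ (m - 1 - 1) * (-2 * w i + ‖w‖ ^ 2 * (2 * x i)))
        * (-2 * w i + ‖w‖ ^ 2 * (2 * x i))
       + m * brk w x ^ (m - 1) * (‖w‖ ^ 2 * 2))
    + (m * brk w x ^ (m - 1) * (-2 * w i + ‖w‖ ^ 2 * (2 * x i))) * (q₁ i + q₂ * (2 * x i))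
    + brk w x ^ m * (q₂ * 2) with hval
  have h2 : ∀ i, fderiv ℝ (fun z => (g i z : ℂ)) x (basisV n i) = (val i : ℂ) := by
    intro i
    have hc : HasFDerivAt (fun z : Eucl n => z i) (EuclideanSpace.proj i : Eucl n →L[ℝ] ℝ) x :=
      (EuclideanSpace.proj i : Eucl n →L[ℝ] ℝ).hasFDerivAt
    have hlin : ∀ α β : ℝ, HasFDerivAt (fun z : Eucl n => α + β * (2 * z i))
        (β • ((2 : ℝ) • (EuclideanSpace.proj i : Eucl n →L[ℝ] ℝ))) x := fun α β =>
      ((hc.const_mul 2).const_mul β).const_add α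
    have ha := ((hasFDerivAt_quad q₀ q₂ q₁ x).fun_mul
      (((hasFDerivAt_brk_rpow w x hQ (m - 1)).const_mul m).fun_mul
        (hlin (-2 * w i) (‖w‖ ^ 2)))).fun_add
      ((hasFDerivAt_brk_rpow w x hQ m).fun_mul (hlin (q₁ i) q₂))
    have hb := (Complex.ofRealCLM.hasFDerivAt.comp x ha).fderiv
    have hc : (fun z => (g i z : ℂ)) = Complex.ofRealCLM ∘ g i := rfl
    rw [hc, hb]
    simp only [hval, ContinuousLinearMap.comp_apply, Complex.ofRealCLM_apply, Complex.ofReal_inj]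
    simp [inner_basisV, basisV_apply]
    ring
  have h3 : ∀ i, fderiv ℝ (fderiv ℝ (fun x => (quadKern q₀ q₂ q₁ w x : ℂ))) x (basisV n i)
      (basisV n i) = (val i : ℂ) := by
    intro i
    have hcd : ContDiffAt ℝ 2 (fun x => (quadKern q₀ q₂ q₁ w x : ℂ)) x :=
      Complex.ofRealCLM.contDiff.contDiffAt.comp x (contDiffAt_quadKern q₀ q₂ q₁ w x hQ)
    have hd : HasFDerivAt (fderiv ℝ (fun x => (quadKern q₀ q₂ q₁ w x : ℂ)))
        (fderiv ℝ (fderiv ℝ (fun x => (quadKern q₀ q₂ q₁ w x : ℂ))) x) x :=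
      ((hcd.fderiv_right (m := 1) (by norm_num)).differentiableAt one_ne_zero).hasFDerivAt
    have he := (hd.clm_apply (hasFDerivAt_const (basisV n i) x)).fderiv
    rw [(h1 i).fderiv_eq] at he
    rw [← h2 i, he]
    simp
  rw [lap_eq]
  simp only [h3]
  rw [← Complex.ofReal_sum, Complex.ofReal_eq_zero]
  have e1 : brk w x ^ (m - 1) = brk w x * brk w x ^ (m - 1 - 1) := by
    rw [← Real.rpow_one_add' hQ.le]
    · congr 1; ring
    · have : (0 : ℝ) ≤ n := by positivity
      rw [hm]; intro h; linarith
  have e2 : brk w x ^ m = brk w x * (brk w x * brk w x ^ (m - 1 - 1)) := by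
    rw [← e1, mul_comm, ← Real.rpow_add_one hQ.ne']
    congr 1; ring
  set C := brk w x ^ (m - 1 - 1) with hC
  have sx : ∑ i, x i * x i = ‖x‖ ^ 2 := by
    rw [EuclideanSpace.real_norm_sq_eq]; simp only [pow_two]
  have sw : ∑ i, w i * w i = ‖w‖ ^ 2 := by
    rw [EuclideanSpace.real_norm_sq_eq]; simp only [pow_two]
  have swx : ∑ i, w i * x i = ⟪w, x⟫_ℝ := by
    rw [PiLp.inner_apply]; simp [mul_comm]
  have sqx : ∑ i, q₁ i * x i = ⟪q₁, x⟫_ℝ := by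
    rw [PiLp.inner_apply]; simp [mul_comm]
  have sqw : ∑ i, q₁ i * w i = ⟪q₁, w⟫_ℝ := by
    rw [PiLp.inner_apply]; simp [mul_comm]
  set q := q₀ + ⟪q₁, x⟫_ℝ + q₂ * ‖x‖ ^ 2 with hqd
  have hterm : ∀ i, val i
      = (-4 * m * brk w x * C) * (q₁ i * w i) + (4 * m * brk w x * C * ‖w‖ ^ 2) * (q₁ i * x i)
        + (-8 * m * brk w x * C * q₂ - 8 * q * m * (m - 1) * C * ‖w‖ ^ 2) * (w i * x i)
        + (8 * m * brk w x * C * q₂ * ‖w‖ ^ 2 + 4 * q * m * (m - 1) * C * ‖w‖ ^ 4) * (x i * x i)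
        + (4 * q * m * (m - 1) * C) * (w i * w i)
        + (2 * q * m * brk w x * C * ‖w‖ ^ 2 + 2 * brk w x ^ 2 * C * q₂) := by
    intro i
    simp only [hval, e1, e2]
    ring
  simp only [hterm, Finset.sum_add_distrib, ← Finset.mul_sum, sx, sw, swx, sqx, sqw,
    Finset.sum_const, Finset.card_univ, Fintype.card_fin, nsmul_eq_mul]
  have hn : (n : ℝ) = -2 * m := by rw [hm]; ring
  rw [hn, hqd, brk]
  linear_combination (-4 * m * C * (1 - 2 * ⟪w, x⟫_ℝ + ‖w‖ ^ 2 * ‖x‖ ^ 2)) * hq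

/-! ### The Poisson formula on a larger ball -/

/-- The mean value property: the case of a constant second function in the invariance of
`∫ u(tζ) v(t⁻¹ζ) dσ(ζ)`, in the limit of vanishing radius. -/
lemma mean_value {n : ℕ} (hn : 2 ≤ n) {a t : ℝ} {u : Eucl n → ℂ}
    (hu : HarmOn u (Metric.ball 0 a)) (ht : 0 < t) (hta : t < a) :
    ∫ ζ, u (t • ζ) ∂(sphMeasure n) = u 0 := by
  have := sphMeasure_isProb (show 1 ≤ n by omega)
  have hconst : ∀ s, 0 < s → s < a →
      ∫ ζ, u (t • ζ) ∂(sphMeasure n) = ∫ ζ, u (s • ζ) ∂(sphMeasure n) := by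
    intro s hs hsa
    have hm : 0 < min s t / 2 := by have := lt_min hs ht; linarith
    have hlt : min s t / 2 < min s t := by linarith
    have hone : HarmOn (fun _ : Eucl n => (1 : ℂ)) (Metric.ball 0 (min s t / 2)⁻¹) := by
      refine ⟨contDiffOn_const, fun x _ => ?_⟩
      rw [lap_eq]; simp
    have := pairing_const hn (inv_pos.2 hm) hu hone (t := t) (s := s)
      (by rw [inv_inv]; exact ⟨hlt.trans_le (min_le_right _ _), hta⟩)
      (by rw [inv_inv]; exact ⟨hlt.trans_le (min_le_left _ _), hsa⟩)
    simpa using this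
  have ha : 0 < a := ht.trans hta
  have hc : ContinuousAt u 0 :=
    (hu.1.continuousOn).continuousAt (Metric.isOpen_ball.mem_nhds (by simpa using ha))
  refine eq_of_forall_dist_le fun ε hε => ?_
  obtain ⟨δ, hδ, hδu⟩ := Metric.continuousAt_iff.1 hc ε hε
  set s := min δ a / 2 with hsd
  have hm := lt_min hδ ha
  have hs : 0 < s := by rw [hsd]; linarith
  have hsδ : s < δ := by have := min_le_left δ a; rw [hsd]; linarith
  have hsa : s < a := by have := min_le_right δ a; rw [hsd]; linarith
  rw [hconst s hs hsa, dist_eq_norm]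
  have hInt : Integrable (fun ζ => u (s • ζ)) (sphMeasure n) := by
    refine integrable_sphere (by omega) (hu.1.continuousOn.comp (by fun_prop) fun ζ hζ => ?_)
    rw [mem_ball_zero_iff, norm_smul, norm_of_mem_uSphere hζ, Real.norm_eq_abs, abs_of_pos hs]
    linarith
  have : ∫ ζ, u (s • ζ) ∂(sphMeasure n) - u 0 = ∫ ζ, (u (s • ζ) - u 0) ∂(sphMeasure n) := by
    rw [integral_sub hInt (integrable_const _)]; simp
  rw [this]
  refine (norm_integral_le_of_norm_le_const (C := ε) ?_).trans (by simp)
  filter_upwards [ae_mem_uSphere n] with ζ hζ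
  rw [← dist_eq_norm]
  refine (hδu ?_).le
  rw [dist_zero_right, norm_smul, norm_of_mem_uSphere hζ, Real.norm_eq_abs, abs_of_pos hs]
  linarith

lemma extPoisson_eq {n : ℕ} (y x : Eucl n) (h : ‖y‖ * ‖x‖ < 1) :
    extPoisson n y x = quadKern 1 (-‖y‖ ^ 2) 0 y x := by
  have := brk_pos h
  rw [quadKern, Real.rpow_neg this.le, extPoisson, brk, div_eq_mul_inv, real_inner_comm]
  simp only [inner_zero_left]
  ring_nf

lemma extPoisson_zero {n : ℕ} (y : Eucl n) : extPoisson n y 0 = 1 := by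
  simp [extPoisson]

lemma HarmOn.congr {n : ℕ} {f g : Eucl n → ℂ} {s : Set (Eucl n)} (hs : IsOpen s)
    (h : HarmOn f s) (hfg : ∀ x ∈ s, g x = f x) : HarmOn g s := by
  refine ⟨h.1.congr hfg, fun x hx => ?_⟩
  have he : g =ᶠ[𝓝 x] f := by filter_upwards [hs.mem_nhds hx] with z hz using hfg z hz
  rw [← h.2 x hx, lap_eq, lap_eq, he.fderiv.fderiv_eq]

lemma extPoisson_harmOn {n : ℕ} {y : Eucl n} {b : ℝ} (hb : ‖y‖ * b ≤ 1) :
    HarmOn (fun x => (extPoisson n y x : ℂ)) (Metric.ball 0 b) := by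
  have hlt : ∀ x ∈ Metric.ball (0 : Eucl n) b, ‖y‖ * ‖x‖ < 1 := by
    intro x hx
    rw [mem_ball_zero_iff] at hx
    rcases (norm_nonneg y).eq_or_lt with h | h
    · rw [← h]; simp
    · nlinarith
  refine HarmOn.congr Metric.isOpen_ball (quadKern_harmOn (q₀ := 1) (q₂ := -‖y‖ ^ 2) (q₁ := 0)
    (w := y) hlt (by simp)) fun x hx => ?_
  rw [extPoisson_eq y x (hlt x hx)]

lemma extPoisson_nonneg {n : ℕ} {y x : Eucl n} (h : ‖y‖ * ‖x‖ < 1) : 0 ≤ extPoisson n y x := by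
  have := brk_pos h
  rw [extPoisson_eq y x h, quadKern]
  refine mul_nonneg ?_ (Real.rpow_nonneg this.le _)
  have h0 : 0 ≤ ‖y‖ * ‖x‖ := by positivity
  simp only [inner_zero_left]
  nlinarith

/-- The Poisson formula for functions harmonic on a neighbourhood of the closed ball. Both
`∫ u(tζ) P_y(t⁻¹ζ) dσ(ζ)` and `∫ P_y(t⁻¹ζ) dσ(ζ) = 1` are independent of `t ∈ (|y|, 1]`, while the
measures `P_y(t⁻¹ζ) dσ(ζ)` concentrate at `y/|y|` as `t → |y|`. -/
lemma poisson_of_ball {n : ℕ} (hn : 2 ≤ n) {a : ℝ} (ha : 1 < a) {u : Eucl n → ℂ}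
    (hu : HarmOn u (Metric.ball 0 a)) {y : Eucl n} (hy : ‖y‖ < 1) :
    ∫ ζ, u ζ * (extPoisson n y ζ : ℂ) ∂(sphMeasure n) = u y := by
  have hn1 : 1 ≤ n := by omega
  have := sphMeasure_isProb hn1
  rcases eq_or_ne y 0 with rfl | hy0
  · have h := mean_value hn hu one_pos ha
    simp only [one_smul] at h
    rw [← h]
    simp [extPoisson]
  set ρ := ‖y‖ with hρ
  have hρ0 : 0 < ρ := norm_pos_iff.2 hy0
  have hv : HarmOn (fun x => (extPoisson n y x : ℂ)) (Metric.ball 0 ρ⁻¹) :=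
    extPoisson_harmOn (by rw [← hρ, mul_inv_cancel₀ hρ0.ne'])
  obtain ⟨M, hM⟩ := (isCompact_closedBall (0 : Eucl n) 1).exists_bound_of_continuousOn
    (hu.1.continuousOn.mono (Metric.closedBall_subset_ball ha))
  have hya : y ∈ Metric.ball (0 : Eucl n) a := by rw [mem_ball_zero_iff]; linarith
  have hc : ContinuousAt u y := hu.1.continuousOn.continuousAt (Metric.isOpen_ball.mem_nhds hya)
  refine eq_of_forall_dist_le fun ε hε => ?_
  obtain ⟨δ, hδ, hδu⟩ := Metric.continuousAt_iff.1 hc ε hε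
  set K := (δ ^ 2) ^ (-((n : ℝ) / 2)) with hK
  have hK0 : 0 ≤ K := by positivity
  have hM0 : 0 ≤ M := (norm_nonneg _).trans (hM 0 (by simp))
  have key : ∀ t ∈ Ioo ρ 1, dist (∫ ζ, u ζ * (extPoisson n y ζ : ℂ) ∂(sphMeasure n)) (u y)
      ≤ ε + 2 * M * ((1 - ρ ^ 2 / t ^ 2) * K) := by
    intro t ht
    have ht0 : 0 < t := hρ0.trans ht.1
    have hpair := pairing_const hn (inv_pos.2 hρ0) hu hv (t := 1) (s := t)
      (by rw [inv_inv]; exact ⟨hy, ha⟩) (by rw [inv_inv]; exact ⟨ht.1, ht.2.trans ha⟩)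
    simp only [one_smul, inv_one] at hpair
    have hone := mean_value hn hv (inv_pos.2 ht0) (by rw [inv_lt_inv₀ ht0 hρ0]; exact ht.1)
    rw [extPoisson_zero] at hone
    rw [hpair, dist_eq_norm]
    have hmem : ∀ ζ ∈ uSphere n, t⁻¹ • ζ ∈ Metric.ball (0 : Eucl n) ρ⁻¹ := by
      intro ζ hζ
      rw [mem_ball_zero_iff, norm_smul, norm_of_mem_uSphere hζ, norm_inv, Real.norm_eq_abs,
        abs_of_pos ht0, mul_one, inv_lt_inv₀ ht0 hρ0]
      exact ht.1
    have hcP : ContinuousOn (fun ζ => (extPoisson n y (t⁻¹ • ζ) : ℂ)) (uSphere n) :=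
      hv.1.continuousOn.comp (by fun_prop) hmem
    have hcu : ContinuousOn (fun ζ => u (t • ζ)) (uSphere n) := by
      refine hu.1.continuousOn.comp (by fun_prop) fun ζ hζ => ?_
      rw [mem_ball_zero_iff, norm_smul, norm_of_mem_uSphere hζ, Real.norm_eq_abs, abs_of_pos ht0]
      linarith [ht.2]
    have hiP := integrable_sphere hn1 hcP
    have hiu : Integrable (fun ζ => u (t • ζ) * (extPoisson n y (t⁻¹ • ζ) : ℂ)) (sphMeasure n) :=
      integrable_sphere hn1 (hcu.mul hcP)
    have hrw : ∫ ζ, u (t • ζ) * (extPoisson n y (t⁻¹ • ζ) : ℂ) ∂(sphMeasure n) - u y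
        = ∫ ζ, (u (t • ζ) - u y) * (extPoisson n y (t⁻¹ • ζ) : ℂ) ∂(sphMeasure n) := by
      simp only [sub_mul]
      rw [integral_sub hiu (hiP.const_mul _), integral_const_mul, hone]
      simp
    rw [hrw]
    have hiP' : Integrable (fun ζ => extPoisson n y (t⁻¹ • ζ)) (sphMeasure n) := by
      simpa using hiP.re
    have hone' : ∫ ζ, extPoisson n y (t⁻¹ • ζ) ∂(sphMeasure n) = 1 := by
      have := hone
      rw [integral_complex_ofReal] at this
      exact_mod_cast this
    have hbound : ∀ᵐ ζ ∂(sphMeasure n), ‖(u (t • ζ) - u y) * (extPoisson n y (t⁻¹ • ζ) : ℂ)‖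
        ≤ ε * extPoisson n y (t⁻¹ • ζ) + 2 * M * ((1 - ρ ^ 2 / t ^ 2) * K) := by
      filter_upwards [ae_mem_uSphere n] with ζ hζ
      have hζ1 := norm_of_mem_uSphere hζ
      have hlt : ‖y‖ * ‖t⁻¹ • ζ‖ < 1 := by
        have := hmem ζ hζ
        rw [mem_ball_zero_iff] at this
        calc _ < ρ * ρ⁻¹ := by gcongr
          _ = 1 := mul_inv_cancel₀ hρ0.ne'
      have hP := extPoisson_nonneg hlt
      have hfac : 0 ≤ 1 - ρ ^ 2 / t ^ 2 := by
        rw [sub_nonneg, div_le_one (by positivity)]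
        exact pow_le_pow_left₀ hρ0.le ht.1.le 2
      rw [norm_mul, Complex.norm_real, Real.norm_of_nonneg hP]
      by_cases hd : dist (t • ζ) y < δ
      · have h1 : ‖u (t • ζ) - u y‖ ≤ ε := by rw [← dist_eq_norm]; exact (hδu hd).le
        have h2 : 0 ≤ 2 * M * ((1 - ρ ^ 2 / t ^ 2) * K) := by positivity
        nlinarith
      · have h1 : ‖u (t • ζ) - u y‖ ≤ 2 * M := by
          refine (norm_sub_le _ _).trans ?_
          have e1 := hM (t • ζ) (by
            rw [mem_closedBall_zero_iff, norm_smul, hζ1, Real.norm_eq_abs, abs_of_pos ht0]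
            linarith [ht.2])
          have e2 := hM y (by rw [mem_closedBall_zero_iff]; exact hy.le)
          linarith
        have hbr : δ ^ 2 ≤ brk y (t⁻¹ • ζ) := by
          have e1 : brk y (t⁻¹ • ζ) = ‖t • ζ - y‖ ^ 2 / t ^ 2 := by
            rw [@norm_sub_sq_real, brk, norm_smul, norm_smul, inner_smul_right, inner_smul_left,
              hζ1, norm_inv, Real.norm_eq_abs, abs_of_pos ht0, real_inner_comm]
            simp only [conj_trivial]
            field_simp
          rw [e1, le_div_iff₀ (by positivity)]
          rw [dist_eq_norm, not_lt] at hd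
          have e2 : δ ^ 2 ≤ ‖t • ζ - y‖ ^ 2 := pow_le_pow_left₀ hδ.le hd 2
          have e3 : t ^ 2 ≤ 1 := pow_le_one₀ ht0.le ht.2.le
          nlinarith [sq_nonneg δ]
        have h2 : extPoisson n y (t⁻¹ • ζ) ≤ (1 - ρ ^ 2 / t ^ 2) * K := by
          rw [extPoisson_eq y _ hlt, quadKern]
          have e1 : (1 : ℝ) + ⟪(0 : Eucl n), t⁻¹ • ζ⟫_ℝ + -‖y‖ ^ 2 * ‖t⁻¹ • ζ‖ ^ 2
              = 1 - ρ ^ 2 / t ^ 2 := by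
            rw [norm_smul, hζ1, norm_inv, Real.norm_eq_abs, abs_of_pos ht0, inner_zero_left]
            field_simp
            ring
          rw [e1]
          refine mul_le_mul_of_nonneg_left ?_ hfac
          exact Real.rpow_le_rpow_of_nonpos (by positivity) hbr (by
            have : (0 : ℝ) ≤ n := by positivity
            linarith)
        have h3 : 0 ≤ ε * extPoisson n y (t⁻¹ • ζ) := by positivity
        have h4 := mul_le_mul h1 h2 hP (by positivity)
        linarith
    refine (norm_integral_le_of_norm_le ((hiP'.const_mul ε).add (integrable_const _)) hbound).trans
      (le_of_eq ?_)
    rw [integral_add' (hiP'.const_mul ε) (integrable_const _), integral_const_mul, hone']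
    simp
  have htend : Tendsto (fun t : ℝ => ε + 2 * M * ((1 - ρ ^ 2 / t ^ 2) * K)) (𝓝[>] ρ) (𝓝 ε) := by
    have h1 : ContinuousAt (fun t : ℝ => ε + 2 * M * ((1 - ρ ^ 2 / t ^ 2) * K)) ρ := by
      have : ρ ^ 2 ≠ 0 := by positivity
      fun_prop (disch := assumption)
    have h2 := h1.tendsto.mono_left (nhdsWithin_le_nhds (s := Ioi ρ))
    have h3 : ε + 2 * M * ((1 - ρ ^ 2 / ρ ^ 2) * K) = ε := by
      rw [div_self (by positivity)]; ring
    rwa [h3] at h2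
  exact ge_of_tendsto htend (by
    filter_upwards [Ioo_mem_nhdsGT hy] with t ht using key t ht)

/-- On the sphere the extended kernel is the Poisson kernel. -/
lemma extPoisson_sphere {n : ℕ} {y ζ : Eucl n} (hζ : ‖ζ‖ = 1) :
    extPoisson n y ζ = (1 - ‖y‖ ^ 2) / ‖y - ζ‖ ^ n := by
  have h1 : 1 - 2 * ⟪ζ, y⟫_ℝ + ‖ζ‖ ^ 2 * ‖y‖ ^ 2 = ‖y - ζ‖ ^ 2 := by
    rw [@norm_sub_sq_real, hζ, real_inner_comm]; ring
  have h2 : (‖y - ζ‖ ^ 2) ^ ((n : ℝ) / 2) = ‖y - ζ‖ ^ n := by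
    rw [← Real.rpow_natCast ‖y - ζ‖ 2, ← Real.rpow_mul (norm_nonneg _),
      ← Real.rpow_natCast ‖y - ζ‖ n]
    congr 1
    push_cast; ring
  rw [extPoisson, h1, h2, hζ]
  ring

/-! ### Poisson representation in `h^q` -/

/-- Almost everywhere convergence together with a uniform `L^s` bound, `s > 1`, allows passing to
the limit under the integral: the tails satisfy `∫_{|h|≥c} |h| ≤ c^{1-s} ∫ |h|^s`, so the sequence
is uniformly integrable. -/
lemma tendsto_integral_of_Ls_bound {α : Type*} [MeasurableSpace α] {μ : Measure α}
    [IsProbabilityMeasure μ] {h : ℕ → α → ℂ} {H : α → ℂ} (hm : ∀ k, AEStronglyMeasurable (h k) μ)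
    {s C : ℝ} (hs : 1 < s) (hi : ∀ k, Integrable (fun x => ‖h k x‖ ^ s) μ)
    (hC : ∀ k, ∫ x, ‖h k x‖ ^ s ∂μ ≤ C)
    (hlim : ∀ᵐ x ∂μ, Tendsto (fun k => h k x) atTop (𝓝 (H x))) :
    Tendsto (fun k => ∫ x, h k x ∂μ) atTop (𝓝 (∫ x, H x ∂μ)) := by
  have hUI : UniformIntegrable h 1 μ := by
    refine uniformIntegrable_of le_rfl ENNReal.one_ne_top hm fun ε hε => ?_
    have h0 : Tendsto (fun c : ℝ => c ^ (-(s - 1)) * C) atTop (𝓝 0) := by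
      simpa using (tendsto_rpow_neg_atTop (y := s - 1) (by linarith)).mul_const C
    obtain ⟨c, hc, hc0⟩ := ((h0.eventually (gt_mem_nhds hε)).and (eventually_gt_atTop 0)).exists
    refine ⟨c.toNNReal, fun k => ?_⟩
    rw [eLpNorm_one_eq_lintegral_enorm]
    have hle : ∀ x, ‖{x | c.toNNReal ≤ ‖h k x‖₊}.indicator (h k) x‖ₑ
        ≤ ENNReal.ofReal (c ^ (-(s - 1)) * ‖h k x‖ ^ s) := by
      intro x
      by_cases hx : x ∈ {x | c.toNNReal ≤ ‖h k x‖₊}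
      · rw [indicator_of_mem hx, ← ofReal_norm]
        apply ENNReal.ofReal_le_ofReal
        have hx' : c ≤ ‖h k x‖ := by
          have : c.toNNReal ≤ ‖h k x‖₊ := hx
          rw [Real.toNNReal_le_iff_le_coe] at this
          simpa using this
        have hpos : 0 < ‖h k x‖ := hc0.trans_le hx'
        have e1 : ‖h k x‖ = ‖h k x‖ ^ (-(s - 1)) * ‖h k x‖ ^ s := by
          rw [← Real.rpow_add hpos]; simp
        calc ‖h k x‖ = ‖h k x‖ ^ (-(s - 1)) * ‖h k x‖ ^ s := e1
          _ ≤ _ := by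
            refine mul_le_mul_of_nonneg_right ?_ (by positivity)
            exact Real.rpow_le_rpow_of_nonpos hc0 hx' (by linarith)
      · rw [indicator_of_notMem hx]; simp
    refine (lintegral_mono hle).trans ?_
    rw [← ofReal_integral_eq_lintegral_ofReal ((hi k).const_mul _)
      (Eventually.of_forall fun x => by positivity), integral_const_mul]
    apply ENNReal.ofReal_le_ofReal
    have : c ^ (-(s - 1)) * ∫ x, ‖h k x‖ ^ s ∂μ ≤ c ^ (-(s - 1)) * C := by
      gcongr; exact hC k
    linarith
  have hH := hUI.memLp_of_ae_tendsto hlim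
  exact tendsto_integral_of_L1' H hH.1
    (Eventually.of_forall fun k => memLp_one_iff_integrable.1 (hUI.memLp k))
    (tendsto_Lp_finite_of_tendsto_ae le_rfl ENNReal.one_ne_top hm hH hUI.unifIntegrable hlim)

lemma smul_mem_ntRegion {n : ℕ} {ζ : Eucl n} (hζ : ‖ζ‖ = 1) {r : ℝ} (hr : r ∈ Ioo (0 : ℝ) 1) :
    r • ζ ∈ ntRegion n 4 ζ := by
  have hn : ‖r • ζ‖ = r := by rw [norm_smul, hζ, Real.norm_eq_abs, abs_of_pos hr.1, mul_one]
  refine ⟨by rw [uBall, mem_ball_zero_iff, hn]; exact hr.2, ?_⟩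
  have : r • ζ - ζ = (r - 1) • ζ := by module
  rw [hn, this, norm_smul, hζ, Real.norm_eq_abs, abs_of_neg (by linarith [hr.2])]
  nlinarith [hr.1, hr.2]

lemma HasNTLimit.radial {n : ℕ} {g : Eucl n → ℂ} {ζ : Eucl n} {L : ℂ} (hg : HasNTLimit n g ζ L)
    (hζ : ‖ζ‖ = 1) {r : ℕ → ℝ} (hr : ∀ k, r k ∈ Ioo (0 : ℝ) 1)
    (hr1 : Tendsto r atTop (𝓝 1)) : Tendsto (fun k => g (r k • ζ)) atTop (𝓝 L) := by
  refine (hg 4 (by norm_num)).comp (tendsto_nhdsWithin_iff.2 ⟨?_, ?_⟩)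
  · simpa using hr1.smul_const ζ
  · exact Eventually.of_forall fun k => smul_mem_ntRegion hζ (hr k)

lemma exists_radii : ∃ r : ℕ → ℝ, (∀ k, r k ∈ Ioo (0 : ℝ) 1) ∧ Tendsto r atTop (𝓝 1) := by
  refine ⟨fun k => 1 - 1 / ((k : ℝ) + 2), fun k => ?_, ?_⟩
  · have : (0 : ℝ) ≤ k := by positivity
    constructor
    · rw [sub_pos, div_lt_one (by positivity)]; linarith
    · have : (0 : ℝ) < 1 / ((k : ℝ) + 2) := by positivity
      linarith
  · have h1 : Tendsto (fun k : ℕ => (k : ℝ) + 2) atTop atTop :=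
      tendsto_atTop_add_const_right _ _ tendsto_natCast_atTop_atTop
    simpa using (tendsto_const_nhds (x := (1 : ℝ))).sub (h1.const_div_atTop 1)

/-- Functions in `h^q`, `1 < q ≤ ∞`, have uniformly bounded means of order `s` for some finite
exponent `s > 1`. -/
lemma MemHp.exists_mean_bound {n : ℕ} (hn : 1 ≤ n) {q : ℝ≥0∞} (hq : 1 < q) {g : Eucl n → ℂ}
    (hg : MemHp n q g) : ∃ s C : ℝ, 1 < s ∧
      ∀ r ∈ Ioo (0 : ℝ) 1, ∫ ζ, ‖g (r • ζ)‖ ^ s ∂(sphMeasure n) ≤ C := by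
  have := sphMeasure_isProb hn
  obtain ⟨_, hb⟩ := hg
  split_ifs at hb with h
  · obtain ⟨C, hC⟩ := hb
    refine ⟨2, C ^ (2 : ℝ), by norm_num, fun r hr => ?_⟩
    have hle : ∀ᵐ ζ ∂(sphMeasure n), ‖g (r • ζ)‖ ^ (2 : ℝ) ≤ C ^ (2 : ℝ) := by
      filter_upwards [ae_mem_uSphere n] with ζ hζ
      refine Real.rpow_le_rpow (norm_nonneg _) (hC ⟨r • ζ, ?_, rfl⟩) (by norm_num)
      rw [uBall, mem_ball_zero_iff, norm_smul, norm_of_mem_uSphere hζ, Real.norm_eq_abs,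
        abs_of_pos hr.1, mul_one]
      exact hr.2
    have := integral_mono_of_nonneg (Eventually.of_forall fun ζ => by positivity)
      (integrable_const (C ^ (2 : ℝ))) hle
    simpa using this
  · obtain ⟨C, hC⟩ := hb
    have hs : 1 < q.toReal := by
      rw [← ENNReal.toReal_one]; exact (ENNReal.toReal_lt_toReal (by simp) h).2 hq
    refine ⟨q.toReal, C ^ q.toReal, hs, fun r hr => ?_⟩
    have h1 := hC ⟨r, ⟨hr.1.le, hr.2⟩, rfl⟩
    have h0 : 0 ≤ ∫ ζ, ‖g (r • ζ)‖ ^ q.toReal ∂(sphMeasure n) :=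
      integral_nonneg fun ζ => by positivity
    have h2 := Real.rpow_le_rpow (Real.rpow_nonneg h0 _) h1 (show 0 ≤ q.toReal by linarith)
    rw [← Real.rpow_mul h0, one_div, inv_mul_cancel₀ (by linarith), Real.rpow_one] at h2
    exact h2

/-- The Poisson representation of `h^q` functions, `1 < q ≤ ∞`, by their boundary values. -/
lemma poisson_repr {n : ℕ} (hn : 2 ≤ n) {q : ℝ≥0∞} (hq : 1 < q) {g G : Eucl n → ℂ}
    (hg : MemHp n q g) (hG : ∀ᵐ ζ ∂(sphMeasure n), HasNTLimit n g ζ (G ζ)) {y : Eucl n}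
    (hy : ‖y‖ < 1) : ∫ ζ, (extPoisson n y ζ : ℂ) * G ζ ∂(sphMeasure n) = g y := by
  have hn1 : 1 ≤ n := by omega
  have := sphMeasure_isProb hn1
  obtain ⟨r, hr, hr1⟩ := exists_radii
  obtain ⟨s, C, hs, hC⟩ := hg.exists_mean_bound hn1 hq
  have hgB : HarmOn g (Metric.ball 0 1) := hg.1
  have hPc : ContinuousOn (fun ζ => (extPoisson n y ζ : ℂ)) (uSphere n) := by
    obtain ⟨b, hb1, hb⟩ : ∃ b : ℝ, 1 < b ∧ ‖y‖ * b ≤ 1 := by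
      refine ⟨2 / (1 + ‖y‖), ?_, ?_⟩
      · rw [lt_div_iff₀ (by positivity)]; linarith
      · rw [← mul_div_assoc, div_le_one (by positivity)]; linarith
    refine (extPoisson_harmOn hb).1.continuousOn.mono fun ζ hζ => ?_
    rw [mem_ball_zero_iff, norm_of_mem_uSphere hζ]; exact hb1
  obtain ⟨M, hM⟩ := (isCompact_uSphere n).exists_bound_of_continuousOn hPc
  have hgc : ∀ k, ContinuousOn (fun ζ => g (r k • ζ)) (uSphere n) := fun k => by
    refine hgB.1.continuousOn.comp (by fun_prop) fun ζ hζ => ?_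
    rw [mem_ball_zero_iff, norm_smul, norm_of_mem_uSphere hζ, Real.norm_eq_abs,
      abs_of_pos (hr k).1, mul_one]
    exact (hr k).2
  have hrpow : ∀ {F : Eucl n → ℂ}, ContinuousOn F (uSphere n) →
      Integrable (fun ζ => ‖F ζ‖ ^ s) (sphMeasure n) := by
    intro F hF
    have h1 : ContinuousOn (fun ζ => ((‖F ζ‖ ^ s : ℝ) : ℂ)) (uSphere n) :=
      Complex.continuous_ofReal.comp_continuousOn
        (hF.norm.rpow_const fun ζ _ => Or.inr (by linarith))
    simpa using (integrable_sphere hn1 h1).re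
  have hlim : Tendsto (fun k => ∫ ζ, (extPoisson n y ζ : ℂ) * g (r k • ζ) ∂(sphMeasure n)) atTop
      (𝓝 (∫ ζ, (extPoisson n y ζ : ℂ) * G ζ ∂(sphMeasure n))) := by
    refine tendsto_integral_of_Ls_bound (C := |M| ^ s * C)
      (fun k => aesm_sphere (hPc.mul (hgc k))) hs
      (fun k => hrpow (hPc.mul (hgc k))) (fun k => ?_) ?_
    · have h1 : ∫ ζ, ‖(extPoisson n y ζ : ℂ) * g (r k • ζ)‖ ^ s ∂(sphMeasure n)
          ≤ ∫ ζ, |M| ^ s * ‖g (r k • ζ)‖ ^ s ∂(sphMeasure n) := by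
        refine integral_mono_ae (hrpow (hPc.mul (hgc k))) ((hrpow (hgc k)).const_mul _) ?_
        filter_upwards [ae_mem_uSphere n] with ζ hζ
        rw [norm_mul, Real.mul_rpow (norm_nonneg _) (norm_nonneg _)]
        have : ‖(extPoisson n y ζ : ℂ)‖ ≤ |M| := (hM ζ hζ).trans (le_abs_self M)
        gcongr
      rw [integral_const_mul] at h1
      refine h1.trans ?_
      have := hC (r k) (hr k)
      gcongr
    · filter_upwards [hG, ae_mem_uSphere n] with ζ h1 h2
      exact (h1.radial (norm_of_mem_uSphere h2) hr hr1).const_mul _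
  have hval : ∀ k, ∫ ζ, (extPoisson n y ζ : ℂ) * g (r k • ζ) ∂(sphMeasure n) = g (r k • y) := by
    intro k
    have h1 := poisson_of_ball hn (one_lt_inv₀ (hr k).1 |>.2 (hr k).2)
      (hgB.comp_smul (hr k).1 (c := (r k)⁻¹) (by rw [mul_inv_cancel₀ (hr k).1.ne'])) hy
    rw [← h1]
    exact integral_congr_ae (Eventually.of_forall fun ζ => mul_comm _ _)
  simp only [hval] at hlim
  have hcy : ContinuousAt g y := hgB.1.continuousOn.continuousAt
    (Metric.isOpen_ball.mem_nhds (by rwa [mem_ball_zero_iff]))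
  have h2 : Tendsto (fun k => g (r k • y)) atTop (𝓝 (g y)) := by
    refine hcy.tendsto.comp ?_
    simpa using hr1.smul_const y
  exact tendsto_nhds_unique hlim h2

/-! ### The light-cone model -/

/-- The ambient space `ℝ × ℝⁿ × ℝ` of the light-cone model of `ℝ̂ⁿ`. -/
abbrev LorV (n : ℕ) := ℝ × Eucl n × ℝ

/-- The Lorentz form of signature `(n+1, 1)`, normalized so that `lor (cone x) (cone y) = -|x - y|²`. -/
noncomputable def lor {n : ℕ} (v u : LorV n) : ℝ := 2 * ⟪v.2.1, u.2.1⟫_ℝ - v.1 * u.2.2 - u.1 * v.2.2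

/-- The light-cone representative of a finite point. -/
noncomputable def cone {n : ℕ} (x : Eucl n) : LorV n := (1, x, ‖x‖ ^ 2)

/-- The light-cone representative of a point of `ℝ̂ⁿ`. -/
noncomputable def coneHat {n : ℕ} : EuclHat n → LorV n := OnePoint.rec (0, 0, 1) cone

lemma coneHat_infty {n : ℕ} : coneHat (OnePoint.infty : EuclHat n) = (0, 0, 1) := rfl

lemma coneHat_coe {n : ℕ} (x : Eucl n) : coneHat (x : EuclHat n) = cone x := rfl

lemma lor_add_left {n : ℕ} (v v' u : LorV n) : lor (v + v') u = lor v u + lor v' u := by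
  simp only [lor, Prod.fst_add, Prod.snd_add, inner_add_left]; ring

lemma lor_smul_left {n : ℕ} (c : ℝ) (v u : LorV n) : lor (c • v) u = c * lor v u := by
  simp only [lor, Prod.smul_fst, Prod.smul_snd, inner_smul_left, smul_eq_mul, conj_trivial]; ring

lemma lor_comm {n : ℕ} (v u : LorV n) : lor v u = lor u v := by
  rw [lor, lor, real_inner_comm]; ring

lemma lor_cone {n : ℕ} (x y : Eucl n) : lor (cone x) (cone y) = -‖x - y‖ ^ 2 := by
  simp only [lor, cone]; rw [@norm_sub_sq_real]; ring

/-- The Lorentz reflection `v ↦ v - (2/⟨m,m⟩)⟨v,m⟩m`; the parameter `c` is `2/⟨m,m⟩`. -/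
noncomputable def lorRefl {n : ℕ} (m : LorV n) (c : ℝ) : LorV n →ₗ[ℝ] LorV n where
  toFun v := v + (-(c * lor v m)) • m
  map_add' v u := by rw [lor_add_left]; module
  map_smul' a v := by rw [lor_smul_left, RingHom.id_apply]; module

lemma lorRefl_apply {n : ℕ} (m : LorV n) (c : ℝ) (v : LorV n) :
    lorRefl m c v = v + (-(c * lor v m)) • m := rfl

lemma lor_lorRefl {n : ℕ} {m : LorV n} {c : ℝ} (hc : c * lor m m = 2) (v u : LorV n) :
    lor (lorRefl m c v) (lorRefl m c u) = lor v u := by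
  simp only [lorRefl_apply, lor_add_left, lor_smul_left]
  rw [lor_comm v, lor_comm m]
  simp only [lor_add_left, lor_smul_left]
  rw [lor_comm u v, lor_comm m v]
  linear_combination c * lor u m * lor v m * hc

lemma lorRefl_lorRefl {n : ℕ} {m : LorV n} {c : ℝ} (hc : c * lor m m = 2) (v : LorV n) :
    lorRefl m c (lorRefl m c v) = v := by
  simp only [lorRefl_apply, lor_add_left, lor_smul_left]
  have : c * (lor v m + -(c * lor v m) * lor m m) = -(c * lor v m) := by
    linear_combination (-c * lor v m) * hc
  rw [this]
  module

/-- The reflection in the sphere `S(a, r)` is induced by the Lorentz reflection along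
`(1, a, |a|² - r²)`. -/
lemma sphereRefl_cone {n : ℕ} (a : Eucl n) {r : ℝ} (hr : 0 < r) (x : EuclHat n) :
    ∃ E : ℝ, 0 < E ∧ lorRefl ((1, a, ‖a‖ ^ 2 - r ^ 2) : LorV n) (r ^ 2)⁻¹ (coneHat x)
      = E • coneHat (sphereRefl n a r x) := by
  have hr2 : r ^ 2 ≠ 0 := by positivity
  induction x using OnePoint.rec with
  | infty =>
    refine ⟨(r ^ 2)⁻¹, by positivity, ?_⟩
    have : sphereRefl n a r OnePoint.infty = (a : EuclHat n) := rfl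
    rw [this, coneHat_coe, coneHat_infty, lorRefl_apply, cone, lor]
    ext1
    · simp
    ext1
    · simp
    · simp; field_simp; ring
  | coe x =>
    by_cases hx : x = a
    · subst hx
      refine ⟨r ^ 2, by positivity, ?_⟩
      have : sphereRefl n x r (x : EuclHat n) = OnePoint.infty := by
        change (if x = x then _ else _) = _
        rw [if_pos rfl]
      rw [this, coneHat_coe, coneHat_infty, lorRefl_apply, cone, lor]
      have h : (r ^ 2)⁻¹ * (2 * ⟪x, x⟫_ℝ - 1 * (‖x‖ ^ 2 - r ^ 2) - 1 * ‖x‖ ^ 2) = 1 := by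
        rw [real_inner_self_eq_norm_sq]; field_simp; ring
      simp only [h]
      ext1
      · simp
      ext1
      · simp
      · simp
    · have hxa : 0 < ‖x - a‖ := norm_pos_iff.2 (sub_ne_zero.2 hx)
      refine ⟨‖x - a‖ ^ 2 / r ^ 2, by positivity, ?_⟩
      have : sphereRefl n a r (x : EuclHat n)
          = ((a + (r ^ 2 / ‖x - a‖ ^ 2) • (x - a) : Eucl n) : EuclHat n) := by
        change (if x = a then _ else _) = _
        rw [if_neg hx]
      rw [this, coneHat_coe, coneHat_coe, lorRefl_apply, cone, lor, cone]
      have h0 : ‖x - a‖ ^ 2 = ‖x‖ ^ 2 - 2 * ⟪x, a⟫_ℝ + ‖a‖ ^ 2 := @norm_sub_sq_real _ _ _ x a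
      have h : (r ^ 2)⁻¹ * (2 * ⟪x, a⟫_ℝ - 1 * (‖a‖ ^ 2 - r ^ 2) - 1 * ‖x‖ ^ 2)
          = 1 - ‖x - a‖ ^ 2 / r ^ 2 := by
        rw [h0]; field_simp; ring
      have hs : ‖x - a‖ ^ 2 / r ^ 2 * (r ^ 2 / ‖x - a‖ ^ 2) = 1 := by field_simp
      simp only [h]
      ext1
      · simp
      ext1
      · simp only [Prod.snd_add, Prod.fst_add, Prod.smul_snd, Prod.smul_fst, smul_add, smul_smul,
          hs]
        module
      · simp only [Prod.snd_add, Prod.smul_snd, smul_eq_mul]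
        rw [@norm_add_sq_real, norm_smul, mul_pow, Real.norm_eq_abs, sq_abs, inner_smul_right,
          inner_sub_right, real_inner_self_eq_norm_sq, real_inner_comm]
        have h1 : ‖x - a‖ ^ 2 ≠ 0 := by positivity
        generalize hd : ‖x - a‖ ^ 2 = d at *
        field_simp
        rw [h0]
        ring

/-- The reflection in the hyperplane `x·a = t` is induced by the Lorentz reflection along
`(0, a, 2t)`. -/
lemma hyperRefl_cone {n : ℕ} {a : Eucl n} (ha : ‖a‖ = 1) (t : ℝ) (x : EuclHat n) :
    ∃ E : ℝ, 0 < E ∧ lorRefl ((0, a, 2 * t) : LorV n) 1 (coneHat x)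
      = E • coneHat (hyperRefl n a t x) := by
  refine ⟨1, one_pos, ?_⟩
  induction x using OnePoint.rec with
  | infty =>
    have : hyperRefl n a t OnePoint.infty = OnePoint.infty := rfl
    rw [this, coneHat_infty, lorRefl_apply, lor]
    simp
  | coe x =>
    have : hyperRefl n a t (x : EuclHat n)
        = ((x - (2 * (⟪x, a⟫_ℝ - t)) • a : Eucl n) : EuclHat n) := rfl
    rw [this, coneHat_coe, coneHat_coe, lorRefl_apply, cone, lor, cone]
    ext1
    · simp
    ext1
    · simp only [Prod.snd_add, Prod.fst_add, Prod.smul_snd, Prod.smul_fst]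
      module
    · simp only [Prod.snd_add, Prod.smul_snd, smul_eq_mul, one_mul]
      rw [@norm_sub_sq_real, norm_smul, mul_pow, Real.norm_eq_abs, sq_abs, inner_smul_right, ha]
      ring

/-- Möbius transformations are induced by Lorentz transformations of the light cone. The map `S` is
a right inverse of `T`, recorded only to solve `T v = (0, 0, 1)`. -/
lemma mobius_linear {n : ℕ} {g : EuclHat n → EuclHat n} (hg : IsMobiusHat n g) :
    ∃ (T : LorV n →ₗ[ℝ] LorV n) (S : LorV n → LorV n), (∀ v u, lor (T v) (T u) = lor v u) ∧
      (∀ v, T (S v) = v) ∧ ∀ x, ∃ E : ℝ, 0 < E ∧ T (coneHat x) = E • coneHat (g x) := by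
  obtain ⟨L, -, hL, rfl⟩ := hg
  induction L with
  | nil =>
    exact ⟨LinearMap.id, id, fun _ _ => rfl, fun _ => rfl, fun x => ⟨1, one_pos, by simp⟩⟩
  | cons f L ih =>
    obtain ⟨T, S, hT, hS, hc⟩ := ih fun f hf => hL f (List.mem_cons_of_mem _ hf)
    obtain ⟨m, c, hmc, hm⟩ : ∃ (m : LorV n) (c : ℝ), c * lor m m = 2 ∧
        ∀ x, ∃ E : ℝ, 0 < E ∧ lorRefl m c (coneHat x) = E • coneHat (f x) := by
      rcases hL f List.mem_cons_self with ⟨a, r, hr, rfl⟩ | ⟨a, t, ha, rfl⟩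
      · refine ⟨_, _, ?_, sphereRefl_cone a hr⟩
        rw [lor, real_inner_self_eq_norm_sq]
        field_simp
        ring
      · refine ⟨_, _, ?_, hyperRefl_cone ha t⟩
        rw [lor, real_inner_self_eq_norm_sq, ha]
        ring
    refine ⟨lorRefl m c ∘ₗ T, fun v => S (lorRefl m c v), fun v u => ?_, fun v => ?_, fun x => ?_⟩
    · rw [LinearMap.comp_apply, LinearMap.comp_apply, lor_lorRefl hmc, hT]
    · rw [LinearMap.comp_apply, hS, lorRefl_lorRefl hmc]
    · obtain ⟨E, hE, h1⟩ := hc x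
      obtain ⟨E', hE', h2⟩ := hm (L.foldr (· ∘ ·) id x)
      refine ⟨E * E', by positivity, ?_⟩
      rw [LinearMap.comp_apply, h1, map_smul, h2, smul_smul]
      rfl

/-- On the set where it is finite, a Möbius map distorts distances through a positive quadratic
function `E` whose coefficients form a null vector, and it is differentiable. -/
lemma mobius_structure {n : ℕ} {φ : Eucl n → Eucl n} {U : Set (Eucl n)}
    (h : IsMobiusRestr n φ U) (hU : IsOpen U) : ∃ (E : Eucl n → ℝ) (e₀ e₂ : ℝ) (e₁ : Eucl n),
      e₀ * e₂ = ‖e₁‖ ^ 2 ∧ (∀ x, E x = e₀ + 2 * ⟪e₁, x⟫_ℝ + e₂ * ‖x‖ ^ 2) ∧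
      (∀ x ∈ U, 0 < E x) ∧ (∀ x ∈ U, ∀ y ∈ U, ‖φ x - φ y‖ ^ 2 * (E x * E y) = ‖x - y‖ ^ 2) ∧
      ∀ x ∈ U, DifferentiableAt ℝ φ x := by
  obtain ⟨g, hg, hgφ⟩ := h
  obtain ⟨T, S, hT, hS, hc⟩ := mobius_linear hg
  set E : Eucl n → ℝ := fun x => (T (cone x)).1 with hE
  have hTc : ∀ x ∈ U, 0 < E x ∧ T (cone x) = E x • cone (φ x) := by
    intro x hx
    obtain ⟨c, hc0, h1⟩ := hc x
    rw [hgφ x hx, coneHat_coe, coneHat_coe] at h1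
    have : E x = c := by rw [hE]; simp only [h1]; simp [cone]
    rw [this]; exact ⟨hc0, h1⟩
  -- the first coordinate of `T v` is `-lor (T v) (0, 0, 1) = -lor v w`, so `E` is quadratic in `x`
  set w : LorV n := S (0, 0, 1) with hw
  refine ⟨E, w.2.2, w.1, -w.2.1, ?_, fun x => ?_, fun x hx => (hTc x hx).1, ?_, ?_⟩
  · have h1 := hT w w
    rw [hw, hS, ← hw, lor, lor, real_inner_self_eq_norm_sq] at h1
    rw [norm_neg]
    simp at h1
    linarith
  · have h1 := hT (cone x) w
    rw [hw, hS, ← hw, lor, lor] at h1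
    simp only [cone, inner_zero_right] at h1
    rw [inner_neg_left, real_inner_comm]
    simp only [hE, cone]
    linarith
  · intro x hx y hy
    have h1 := hT (cone x) (cone y)
    rw [(hTc x hx).2, (hTc y hy).2, lor_smul_left, lor_comm, lor_smul_left, lor_cone, lor_cone,
      norm_sub_rev] at h1
    linarith
  · intro x hx
    have hcone : DifferentiableAt ℝ (fun z : Eucl n => T (cone z)) x := by
      have h1 : DifferentiableAt ℝ (cone : Eucl n → LorV n) x :=
        (differentiableAt_const 1).prodMk (differentiableAt_id.prodMk
          ((contDiff_norm_sq ℝ).differentiable (n := 1) one_ne_zero x))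
      exact (LinearMap.toContinuousLinearMap T).differentiableAt.comp x h1
    have hd : DifferentiableAt ℝ (fun z => (E z)⁻¹ • (T (cone z)).2.1) x :=
      (hcone.fst.inv (hTc x hx).1.ne').smul hcone.snd.fst
    refine hd.congr_of_eventuallyEq ?_
    filter_upwards [hU.mem_nhds hx] with z hz
    rw [(hTc z hz).2]
    simp [cone, inv_mul_cancel₀ (hTc z hz).1.ne', smul_smul]

/-! ### Möbius self-maps of the ball -/

/-- A map satisfying the two-point distortion identity is conformal, with linear dilatation `1/E`;
this is computed from difference quotients. -/
lemma normDeriv_eq {n : ℕ} (hn : 1 ≤ n) {φ : Eucl n → Eucl n} {U : Set (Eucl n)} (hU : IsOpen U)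
    {E : Eucl n → ℝ} (hEc : Continuous E) (hE : ∀ x ∈ U, 0 < E x)
    (hφ : ∀ x ∈ U, ∀ y ∈ U, ‖φ x - φ y‖ ^ 2 * (E x * E y) = ‖x - y‖ ^ 2) {x : Eucl n}
    (hx : x ∈ U) (hd : DifferentiableAt ℝ φ x) : normDeriv φ x = (E x)⁻¹ := by
  have hE0 := hE x hx
  set D := fderiv ℝ φ x with hD
  have hDv : ∀ v, ‖D v‖ ^ 2 * (E x * E x) = ‖v‖ ^ 2 := by
    intro v
    have hz : Tendsto (fun c : ℝ => x + c⁻¹ • v) atTop (𝓝 x) := by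
      simpa using ((tendsto_inv_atTop_zero (𝕜 := ℝ)).smul_const v).const_add x
    have h1 : Tendsto (fun c : ℝ => ‖c • (φ (x + c⁻¹ • v) - φ x)‖ ^ 2 * (E (x + c⁻¹ • v) * E x))
        atTop (𝓝 (‖D v‖ ^ 2 * (E x * E x))) :=
      ((hd.hasFDerivAt.lim_real v).norm.pow 2).mul (((hEc.tendsto x).comp hz).mul_const _)
    have h2 : (fun c : ℝ => ‖c • (φ (x + c⁻¹ • v) - φ x)‖ ^ 2 * (E (x + c⁻¹ • v) * E x))
        =ᶠ[atTop] fun _ => ‖v‖ ^ 2 := by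
      filter_upwards [hz.eventually (hU.mem_nhds hx), eventually_gt_atTop 0] with c hc hc0
      have h3 := hφ _ hc x hx
      rw [norm_smul, mul_pow, mul_assoc, h3, add_sub_cancel_left, norm_smul, mul_pow, norm_inv,
        Real.norm_eq_abs, abs_of_pos hc0]
      field_simp
    exact tendsto_nhds_unique (h1.congr' h2) tendsto_const_nhds |>.symm ▸ rfl
  let f : Eucl n →ₗᵢ[ℝ] Eucl n := ⟨E x • (D : Eucl n →ₗ[ℝ] Eucl n), fun v => by
    rw [LinearMap.smul_apply, norm_smul, Real.norm_of_nonneg hE0.le]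
    refine (sq_eq_sq₀ (by positivity) (norm_nonneg _)).1 ?_
    rw [← hDv v]
    simp only [ContinuousLinearMap.coe_coe]
    ring⟩
  have h1 : E x ^ n * (D : Eucl n →ₗ[ℝ] Eucl n).normDet = 1 := by
    have := f.normDet_eq_one
    rw [show f.toLinearMap = E x • (D : Eucl n →ₗ[ℝ] Eucl n) from rfl, LinearMap.normDet_smul,
      finrank_euclideanSpace_fin, Real.norm_of_nonneg hE0.le] at this
    exact this
  have h2 : |(jacMatrix φ x).det| = (D : Eucl n →ₗ[ℝ] Eucl n).normDet := by
    rw [LinearMap.normDet_eq_norm_det_toMatrix _ (EuclideanSpace.basisFun (Fin n) ℝ)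
      (EuclideanSpace.basisFun (Fin n) ℝ), Real.norm_eq_abs]
    congr 2
  have h3 : (D : Eucl n →ₗ[ℝ] Eucl n).normDet = (E x)⁻¹ ^ n := by
    rw [inv_pow]; exact eq_inv_of_mul_eq_one_right h1
  rw [normDeriv, h2, h3]
  exact Real.pow_rpow_inv_natCast (inv_nonneg.2 hE0.le) (by omega)

/-- The geometry of a Möbius self-map `φ` of the ball, with `α = φ⁻¹(0)` and
`E(x) = brk α x / (1 - |α|²)`: it is continuous on the closed ball with `|Dφ| = 1/E`, preserves the
sphere, and satisfies `E(x) (1 - |φ(x)|²) = 1 - |x|²` and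
`brk (φ x) (φ y) E(x) E(y) = brk x y`. -/
lemma mobius_ball {n : ℕ} (hn : 1 ≤ n) {φ φinv : Eucl n → Eucl n} (hφ : IsMobiusBall n φ)
    (hφinv : IsMobiusBall n φinv)
    (hright : ∀ x ∈ Metric.closedBall (0 : Eucl n) 1, φ (φinv x) = x) :
    ContinuousOn φ (Metric.closedBall 0 1) ∧
    (∀ x ∈ Metric.closedBall (0 : Eucl n) 1,
      normDeriv φ x = (1 - ‖φinv 0‖ ^ 2) / brk (φinv 0) x) ∧
    (∀ ζ ∈ uSphere n, φ ζ ∈ uSphere n) ∧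
    (∀ x ∈ Metric.closedBall (0 : Eucl n) 1,
      brk (φinv 0) x / (1 - ‖φinv 0‖ ^ 2) * (1 - ‖φ x‖ ^ 2) = 1 - ‖x‖ ^ 2) ∧
    (∀ x ∈ Metric.closedBall (0 : Eucl n) 1, ∀ y ∈ Metric.closedBall (0 : Eucl n) 1,
      brk (φ x) (φ y) * (brk (φinv 0) x / (1 - ‖φinv 0‖ ^ 2) *
        (brk (φinv 0) y / (1 - ‖φinv 0‖ ^ 2))) = brk x y) := by
  obtain ⟨⟨U, hU, hBU, hres⟩, hbij⟩ := hφ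
  obtain ⟨E, e₀, e₂, e₁, hnull, hEq, hE, hdist, hdiff⟩ := mobius_structure hres hU
  have hcont : ContinuousOn φ (Metric.closedBall 0 1) := fun x hx =>
    (hdiff x (hBU hx)).continuousAt.continuousWithinAt
  have hEc : Continuous E := by
    rw [show E = fun x => e₀ + 2 * ⟪e₁, x⟫_ℝ + e₂ * ‖x‖ ^ 2 from funext hEq]
    fun_prop
  set α := φinv 0 with hα
  have hα1 : ‖α‖ < 1 := by
    have := hφinv.2.mapsTo (show (0 : Eucl n) ∈ uBall n by simp [uBall])
    rwa [uBall, mem_ball_zero_iff] at this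
  have hαc : α ∈ Metric.closedBall (0 : Eucl n) 1 := by
    rw [mem_closedBall_zero_iff]; exact hα1.le
  have hφα : φ α = 0 := hright 0 (by simp)
  have hsc : uSphere n ⊆ Metric.closedBall 0 1 := Metric.sphere_subset_closedBall
  have hsph : ∀ ζ ∈ uSphere n, φ ζ ∈ uSphere n := by
    intro ζ hζ
    have h1 : φ ζ ∈ Metric.closedBall (0 : Eucl n) 1 := by
      have hcl : closure (Metric.ball (0 : Eucl n) 1) = Metric.closedBall 0 1 :=
        closure_ball 0 one_ne_zero
      have hmaps : MapsTo φ (Metric.ball 0 1) (Metric.closedBall 0 1) := fun x hx =>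
        Metric.ball_subset_closedBall (hbij.mapsTo hx)
      have := hmaps.closure_of_continuousOn (by rwa [hcl])
      rw [hcl, Metric.isClosed_closedBall.closure_eq] at this
      exact this (hsc hζ)
    by_contra hne
    have h2 : φ ζ ∈ uBall n := by
      rw [mem_closedBall_zero_iff] at h1
      rw [uBall, mem_ball_zero_iff]
      exact lt_of_le_of_ne h1 fun h => hne (by simp [uSphere, h])
    obtain ⟨x, hx, hxζ⟩ := hbij.surjOn h2
    have h3 := hdist x (hBU (Metric.ball_subset_closedBall hx)) ζ (hBU (hsc hζ))
    rw [hxζ, sub_self, norm_zero] at h3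
    have h4 : x = ζ := by
      rw [← sub_eq_zero, ← norm_eq_zero]
      have : ‖x - ζ‖ ^ 2 = 0 := by rw [← h3]; ring
      exact pow_eq_zero_iff two_ne_zero |>.1 this
    rw [h4, uBall, mem_ball_zero_iff, norm_of_mem_uSphere hζ] at hx
    exact lt_irrefl _ hx
  have hEα := hE α (hBU hαc)
  set μ := (E α)⁻¹ with hμ
  have hμ0 : 0 < μ := inv_pos.2 hEα
  have hμE : μ * E α = 1 := inv_mul_cancel₀ hEα.ne'
  have hEφ : ∀ x ∈ Metric.closedBall (0 : Eucl n) 1, E x * ‖φ x‖ ^ 2 = μ * ‖x - α‖ ^ 2 := by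
    intro x hx
    have h1 := hdist x (hBU hx) α (hBU hαc)
    rw [hφα, sub_zero] at h1
    rw [← h1]
    linear_combination (-E x * ‖φ x‖ ^ 2) * hμE
  -- comparing the two quadratic expressions for `E` on the sphere determines `E`
  have hES : ∀ ζ ∈ uSphere n, e₀ + 2 * ⟪e₁, ζ⟫_ℝ + e₂ = μ * (1 - 2 * ⟪α, ζ⟫_ℝ + ‖α‖ ^ 2) := by
    intro ζ hζ
    have h1 := hEφ ζ (hsc hζ)
    rw [hEq, norm_of_mem_uSphere (hsph ζ hζ), @norm_sub_sq_real, norm_of_mem_uSphere hζ] at h1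
    linear_combination h1 + 2 * μ * real_inner_comm ζ α
  have hneg : ∀ ζ ∈ uSphere n, e₀ - 2 * ⟪e₁, ζ⟫_ℝ + e₂ = μ * (1 + 2 * ⟪α, ζ⟫_ℝ + ‖α‖ ^ 2) := by
    intro ζ hζ
    have h1 := hES (-ζ) (by rw [uSphere, mem_sphere_zero_iff_norm, norm_neg];
                            exact norm_of_mem_uSphere hζ)
    rw [inner_neg_right, inner_neg_right] at h1
    linarith
  have hbas : ∀ i, basisV n i ∈ uSphere n := by
    intro i; simp [uSphere, basisV]
  have hsum : e₀ + e₂ = μ * (1 + ‖α‖ ^ 2) := by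
    have i : Fin n := ⟨0, hn⟩
    have h1 := hES _ (hbas i)
    have h2 := hneg _ (hbas i)
    linarith
  have he₁ : e₁ = -(μ • α) := by
    ext i
    have h1 := hES _ (hbas i)
    have h2 := hneg _ (hbas i)
    rw [inner_basisV, inner_basisV] at h1 h2
    simp only [PiLp.neg_apply, PiLp.smul_apply, smul_eq_mul]
    linarith
  have hprod : e₀ * e₂ = μ ^ 2 * ‖α‖ ^ 2 := by
    rw [hnull, he₁, norm_neg, norm_smul, mul_pow, Real.norm_eq_abs, sq_abs]
  have hEx : ∀ x, E x = e₀ - 2 * μ * ⟪α, x⟫_ℝ + e₂ * ‖x‖ ^ 2 := by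
    intro x
    rw [hEq, he₁, inner_neg_left, inner_smul_left]
    simp only [conj_trivial]
    ring
  -- the second root would make `E` vanish at `α`
  have hroots : e₀ = μ ∨ e₀ = μ * ‖α‖ ^ 2 := by
    have : (e₀ - μ) * (e₀ - μ * ‖α‖ ^ 2) = 0 := by
      linear_combination e₀ * hsum - hprod
    rcases mul_eq_zero.1 this with h | h
    · left; linarith
    · right; linarith
  have he₀ : e₀ = μ := by
    rcases hroots with h | h
    · exact h
    · have h2 := hEx α
      rw [real_inner_self_eq_norm_sq] at h2
      have : E α = 0 := by
        rw [h2]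
        linear_combination h + ‖α‖ ^ 2 * (hsum - h)
      linarith
  have he₂ : e₂ = μ * ‖α‖ ^ 2 := by linarith
  have hαpos : 0 < 1 - ‖α‖ ^ 2 := by nlinarith [norm_nonneg α]
  have hμα : μ * (1 - ‖α‖ ^ 2) = 1 := by
    have h2 := hEx α
    rw [real_inner_self_eq_norm_sq, he₀, he₂] at h2
    have h3 : (μ * (1 - ‖α‖ ^ 2)) ^ 2 = 1 := by
      linear_combination hμE - μ * h2
    exact (pow_eq_one_iff_of_nonneg (by positivity) two_ne_zero).1 h3
  have hμ' : μ = (1 - ‖α‖ ^ 2)⁻¹ := eq_inv_of_mul_eq_one_left hμα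
  have hEb : ∀ x, E x = brk α x / (1 - ‖α‖ ^ 2) := by
    intro x
    rw [hEx, he₀, he₂, brk, div_eq_mul_inv, ← hμ']
    ring
  have hone : ∀ x ∈ Metric.closedBall (0 : Eucl n) 1,
      E x * (1 - ‖φ x‖ ^ 2) = 1 - ‖x‖ ^ 2 := by
    intro x hx
    have h1 := hEφ x hx
    have h2 := hEb x
    rw [div_eq_mul_inv, ← hμ', brk_eq] at h2
    rw [mul_sub, h1, h2]
    linear_combination (1 - ‖x‖ ^ 2) * hμα
  refine ⟨hcont, fun x hx => ?_, hsph, fun x hx => ?_, fun x hx y hy => ?_⟩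
  · rw [normDeriv_eq hn hU hEc hE hdist (hBU hx) (hdiff x (hBU hx)), hEb, inv_div]
  · rw [← hEb]; exact hone x hx
  · rw [← hEb, ← hEb, brk_eq, brk_eq x y, norm_sub_rev, norm_sub_rev y x]
    have h1 := hone x hx
    have h2 := hone y hy
    have h3 := hdist x (hBU hx) y (hBU hy)
    rw [← h3, ← h1, ← h2]
    ring

/-! ### The Poisson kernel under the weighted composition operator -/

lemma memHp_of_continuousOn {n : ℕ} (hn : 1 ≤ n) {p : ℝ≥0∞} (hp : 1 ≤ p) (hpfin : p ≠ ⊤)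
    {f : Eucl n → ℂ} (hf : HarmOn f (uBall n))
    (hc : ContinuousOn f (Metric.closedBall (0 : Eucl n) 1)) : MemHp n p f := by
  have := sphMeasure_isProb hn
  obtain ⟨M, hM⟩ := (isCompact_closedBall (0 : Eucl n) 1).exists_bound_of_continuousOn hc
  have hM0 : 0 ≤ M := (norm_nonneg _).trans (hM 0 (by simp))
  have hp0 : 0 < p.toReal := ENNReal.toReal_pos (by positivity) hpfin
  refine ⟨hf, ?_⟩
  rw [if_neg hpfin]
  refine ⟨(M ^ p.toReal) ^ (1 / p.toReal), ?_⟩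
  rintro _ ⟨r, hr, rfl⟩
  refine Real.rpow_le_rpow (integral_nonneg fun ζ => by positivity) ?_ (by positivity)
  have hb : ∀ᵐ ζ ∂(sphMeasure n), ‖‖f (r • ζ)‖ ^ p.toReal‖ ≤ M ^ p.toReal := by
    filter_upwards [ae_mem_uSphere n] with ζ hζ
    rw [Real.norm_of_nonneg (by positivity)]
    refine Real.rpow_le_rpow (norm_nonneg _) (hM _ ?_) hp0.le
    rw [mem_closedBall_zero_iff, norm_smul, norm_of_mem_uSphere hζ, Real.norm_of_nonneg hr.1]
    linarith [hr.2]
  have h1 := norm_integral_le_of_norm_le_const hb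
  rw [probReal_univ, mul_one] at h1
  exact (le_abs_self _).trans h1

/-- A function continuous up to the sphere is its own boundary function. -/
lemma HasNTLimit.eq_of_continuousOn {n : ℕ} {f : Eucl n → ℂ} {ζ : Eucl n} {L : ℂ}
    (h : HasNTLimit n f ζ L) (hζ : ‖ζ‖ = 1)
    (hc : ContinuousOn f (Metric.closedBall (0 : Eucl n) 1)) : L = f ζ := by
  obtain ⟨r, hr, hr1⟩ := exists_radii
  have h1 := h.radial hζ hr hr1
  have h2 : Tendsto (fun k => r k • ζ) atTop (𝓝[Metric.closedBall (0 : Eucl n) 1] ζ) := by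
    refine tendsto_nhdsWithin_iff.2 ⟨by simpa using hr1.smul_const ζ, Eventually.of_forall
      fun k => ?_⟩
    rw [mem_closedBall_zero_iff, norm_smul, hζ, Real.norm_of_nonneg (hr k).1.le]
    linarith [(hr k).2]
  have h3 := (hc ζ (by rw [mem_closedBall_zero_iff, hζ])).tendsto.comp h2
  exact tendsto_nhds_unique h1 h3

lemma extPoisson_continuousOn {n : ℕ} {y : Eucl n} (hy : ‖y‖ < 1) :
    ContinuousOn (extPoisson n y) (Metric.closedBall (0 : Eucl n) 1) := by
  have hlt : ∀ x ∈ Metric.closedBall (0 : Eucl n) 1, ‖y‖ * ‖x‖ < 1 := by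
    intro x hx
    rw [mem_closedBall_zero_iff] at hx
    nlinarith [norm_nonneg y]
  refine ContinuousOn.congr (f := quadKern 1 (-‖y‖ ^ 2) 0 y) (fun x hx => ?_)
    fun x hx => extPoisson_eq y x (hlt x hx)
  exact (contDiffAt_quadKern _ _ _ _ _ (brk_pos (hlt x hx))).continuousAt.continuousWithinAt

/-- Composing `P_y` with a Möbius map `φ` of the ball and multiplying by `|Dφ|^{(n-2)/2}` gives,
up to a constant, the quotient of a quadratic polynomial by the `n/2`-th power of `brk w`, where
`w = φ⁻¹(y)`. Its numerator vanishes at the pole, hence the product is harmonic. -/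
lemma wco_extPoisson_harmOn {n : ℕ} {φ : Eucl n → Eucl n} {α y w : Eucl n} (hα : ‖α‖ < 1)
    (hy : ‖y‖ < 1) (hw : ‖w‖ < 1) (hwy : φ w = y)
    (hone : ∀ x ∈ Metric.closedBall (0 : Eucl n) 1,
      brk α x / (1 - ‖α‖ ^ 2) * (1 - ‖φ x‖ ^ 2) = 1 - ‖x‖ ^ 2)
    (htwo : ∀ x ∈ Metric.closedBall (0 : Eucl n) 1, ∀ z ∈ Metric.closedBall (0 : Eucl n) 1,
      brk (φ x) (φ z) * (brk α x / (1 - ‖α‖ ^ 2) * (brk α z / (1 - ‖α‖ ^ 2))) = brk x z)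
    (hball : ∀ x ∈ uBall n, φ x ∈ uBall n) :
    HarmOn (fun x => ((((1 - ‖α‖ ^ 2) / brk α x) ^ (((n : ℝ) - 2) / 2) *
      extPoisson n y (φ x) : ℝ) : ℂ)) (uBall n) := by
  have hlt : ∀ z : Eucl n, ‖z‖ < 1 → ∀ x ∈ uBall n, ‖z‖ * ‖x‖ < 1 := by
    intro z hz x hx
    rw [uBall, mem_ball_zero_iff] at hx
    nlinarith [norm_nonneg z, norm_nonneg x]
  have hcb : uBall n ⊆ Metric.closedBall 0 1 := Metric.ball_subset_closedBall
  have hwb : w ∈ uBall n := by rwa [uBall, mem_ball_zero_iff]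
  have hα0 : 0 < 1 - ‖α‖ ^ 2 := by nlinarith [norm_nonneg α]
  have hEw : 0 < brk α w / (1 - ‖α‖ ^ 2) := div_pos (brk_pos (hlt α hα w hwb)) hα0
  set A := ‖y‖ ^ 2 with hA
  set B := (1 - ‖y‖ ^ 2) / (1 - ‖α‖ ^ 2) with hB
  have hB' : B * (1 - ‖α‖ ^ 2) = 1 - ‖y‖ ^ 2 := div_mul_cancel₀ _ hα0.ne'
  have hw1 := hone w (hcb hwb)
  rw [hwy] at hw1
  have hBw : B * brk α w = 1 - ‖w‖ ^ 2 := by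
    rw [← hw1, hB]; ring
  -- the numerator `A (1 - |x|²) + B brk α x` of the product vanishes at the reflection of `w`
  have hcond : (-A + B * ‖α‖ ^ 2) + ⟪(-2 * B) • α, w⟫_ℝ + ‖w‖ ^ 2 * (A + B) = 0 := by
    rw [real_inner_smul_left]
    rw [brk] at hBw
    linear_combination hBw + (‖w‖ ^ 2 - 1) * hB'
  set c := (brk α w / (1 - ‖α‖ ^ 2)) ^ ((n : ℝ) / 2) with hc
  have hmul : HarmOn (fun x => (quadKern (c * (A + B)) (c * (-A + B * ‖α‖ ^ 2))
      (c • ((-2 * B) • α)) w x : ℂ)) (uBall n) := by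
    refine quadKern_harmOn (hlt w hw) ?_
    rw [real_inner_smul_left]
    linear_combination c * hcond
  refine hmul.congr Metric.isOpen_ball fun x hx => ?_
  have hbx : 0 < brk α x := brk_pos (hlt α hα x hx)
  have hEx : 0 < brk α x / (1 - ‖α‖ ^ 2) := div_pos hbx hα0
  have hbw : 0 < brk w x := brk_pos (hlt w hw x hx)
  have hx1 := hone x (hcb hx)
  have h2 := htwo w (hcb hwb) x (hcb hx)
  rw [hwy] at h2
  have hφx : ‖y‖ * ‖φ x‖ < 1 := hlt y hy _ (hball x hx)
  have hby : 0 < brk y (φ x) := brk_pos hφx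
  rw [Complex.ofReal_inj, extPoisson_eq y _ hφx, quadKern, quadKern, ← h2, ← inv_div]
  set e := brk α x / (1 - ‖α‖ ^ 2) with he
  set e' := brk α w / (1 - ‖α‖ ^ 2) with he'
  have hnum : c * (A + B) + ⟪c • ((-2 * B) • α), x⟫_ℝ + c * (-A + B * ‖α‖ ^ 2) * ‖x‖ ^ 2
      = c * (e * (1 - ‖y‖ ^ 2 * ‖φ x‖ ^ 2)) := by
    have hbe : B * brk α x = e * (1 - ‖y‖ ^ 2) := by rw [hB, he]; ring
    rw [brk] at hbe
    rw [real_inner_smul_left, real_inner_smul_left]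
    linear_combination c * hbe - c * A * hx1
  rw [hnum, Real.mul_rpow hby.le (by positivity), Real.mul_rpow hEw.le hEx.le, hc,
    inner_zero_left, Real.inv_rpow hEx.le, ← Real.rpow_neg hEx.le]
  have h3 : e' ^ ((n : ℝ) / 2) * e' ^ (-((n : ℝ) / 2)) = 1 := by
    rw [← Real.rpow_add hEw]; simp
  have h4 : e ^ (-(((n : ℝ) - 2) / 2)) = e * e ^ (-((n : ℝ) / 2)) := by
    rw [mul_comm, ← Real.rpow_add_one hEx.ne']
    congr 1; ring
  rw [h4]
  linear_combination (-(e * (1 - ‖y‖ ^ 2 * ‖φ x‖ ^ 2)) * brk y (φ x) ^ (-((n : ℝ) / 2)) *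
    e ^ (-((n : ℝ) / 2))) * h3

/-! ### The adjoint formula -/

/-- formula (4.2): For `n ≥ 2`, `1 ≤ p < ∞`, `φ ∈ Möb(B)` with inverse
`φ⁻¹`, `ψ = |Dφ|^{(n−2)/2}`, and `W*` the adjoint of `W_{φ,ψ}` on `h^{p′}(B)`, for every
`f ∈ h^{p′}(B)` and `y ∈ B`:
`(W*f)(y) = ∫_S f*(ζ)((1−|φ⁻¹(0)|²)/|φ⁻¹(0)−ζ|²)^{(n−2)/2}(1−|y|²)/|y−φ(ζ)|ⁿ dσ(ζ)`. -/
theorem adjoint_wco_formula (n : ℕ) (hn : 2 ≤ n)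
    (p q : ℝ≥0∞) (hp : 1 ≤ p) (hpfin : p ≠ ⊤) (hpq : p⁻¹ + q⁻¹ = 1)
    (φ φinv : Eucl n → Eucl n)
    (hφ : IsMobiusBall n φ) (hφinv : IsMobiusBall n φinv)
    (hleft : ∀ x ∈ Metric.closedBall (0 : Eucl n) 1, φinv (φ x) = x)
    (hright : ∀ x ∈ Metric.closedBall (0 : Eucl n) 1, φ (φinv x) = x)
    (ψ : Eucl n → ℂ)
    (hψ : ∀ x, ψ x = (↑(normDeriv φ x ^ (((n : ℝ) - 2) / 2)) : ℂ))
    (bd : (Eucl n → ℂ) → (Eucl n → ℂ))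
    (hbd : ∀ f, MemHp n p f ∨ MemHp n q f →
      ∀ᵐ ζ ∂(sphMeasure n), HasNTLimit n f ζ (bd f ζ))
    (Wstar : (Eucl n → ℂ) → (Eucl n → ℂ))
    (hWmaps : ∀ g, MemHp n q g → MemHp n q (Wstar g))
    (hadj : ∀ f g, MemHp n p f → MemHp n q g →
      hpPairing n bd (wco φ ψ f) g = hpPairing n bd f (Wstar g)) :
    ∀ f, MemHp n q f → ∀ y ∈ uBall n,
      Wstar f y =
        ∫ ζ, bd f ζ *
          ((((1 - ‖φinv 0‖ ^ 2) / ‖φinv 0 - ζ‖ ^ 2) ^ (((n : ℝ) - 2) / 2) : ℝ) : ℂ) *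
          (((1 - ‖y‖ ^ 2) / ‖y - φ ζ‖ ^ n : ℝ) : ℂ) ∂(sphMeasure n) := by
  intro f hf y hyB
  have hn1 : 1 ≤ n := by omega
  have hy : ‖y‖ < 1 := by rwa [uBall, mem_ball_zero_iff] at hyB
  have hq : 1 < q := by
    by_contra hq
    have h1 : 1 ≤ q⁻¹ := ENNReal.one_le_inv.2 (not_lt.1 hq)
    have h2 : 0 < p⁻¹ := ENNReal.inv_pos.2 hpfin
    have h3 : (1 : ℝ≥0∞) < p⁻¹ + q⁻¹ := by
      calc (1 : ℝ≥0∞) = 0 + 1 := (zero_add 1).symm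
        _ < p⁻¹ + q⁻¹ := ENNReal.add_lt_add_of_lt_of_le ENNReal.one_ne_top h2 h1
    exact h3.ne' hpq
  obtain ⟨hcont, hnd, hsph, hone, htwo⟩ := mobius_ball hn1 hφ hφinv hright
  have hα : ‖φinv 0‖ < 1 := by
    have := hφinv.2.mapsTo (show (0 : Eucl n) ∈ uBall n by simp [uBall])
    rwa [uBall, mem_ball_zero_iff] at this
  have hw : ‖φinv y‖ < 1 := by
    have := hφinv.2.mapsTo hyB
    rwa [uBall, mem_ball_zero_iff] at this
  have hcb : uBall n ⊆ Metric.closedBall 0 1 := Metric.ball_subset_closedBall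
  have hmaps : MapsTo φ (Metric.closedBall (0 : Eucl n) 1) (Metric.closedBall 0 1) := by
    intro x hx
    rcases (mem_closedBall_zero_iff.1 hx).lt_or_eq with h | h
    · exact hcb (hφ.2.mapsTo (mem_ball_zero_iff.2 h))
    · exact Metric.sphere_subset_closedBall (hsph x (mem_sphere_zero_iff_norm.2 h))
  have hbrk : ∀ x ∈ Metric.closedBall (0 : Eucl n) 1, 0 < brk (φinv 0) x := by
    intro x hx
    rw [mem_closedBall_zero_iff] at hx
    exact brk_pos (by nlinarith [norm_nonneg (φinv 0)])
  have hα0 : 0 < 1 - ‖φinv 0‖ ^ 2 := by nlinarith [norm_nonneg (φinv 0)]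
  -- the test function is the Poisson kernel `P_y`, which belongs to `h^p` for every `p`
  set P : Eucl n → ℂ := fun x => (extPoisson n y x : ℂ) with hP
  have hPc : ContinuousOn P (Metric.closedBall 0 1) :=
    Complex.continuous_ofReal.comp_continuousOn (extPoisson_continuousOn hy)
  have hPmem : MemHp n p P :=
    memHp_of_continuousOn hn1 hp hpfin (extPoisson_harmOn (by linarith)) hPc
  have hWeq : ∀ x ∈ Metric.closedBall (0 : Eucl n) 1, wco φ ψ P x =
      ((((1 - ‖φinv 0‖ ^ 2) / brk (φinv 0) x) ^ (((n : ℝ) - 2) / 2) *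
        extPoisson n y (φ x) : ℝ) : ℂ) := by
    intro x hx
    rw [wco, hψ, hnd x hx, Complex.ofReal_mul]
  have hWharm : HarmOn (wco φ ψ P) (uBall n) :=
    (wco_extPoisson_harmOn hα hy hw (hright y (hcb hyB)) hone htwo
      fun x hx => hφ.2.mapsTo hx).congr Metric.isOpen_ball fun x hx => hWeq x (hcb hx)
  have hWc : ContinuousOn (wco φ ψ P) (Metric.closedBall 0 1) := by
    refine ContinuousOn.congr (Complex.continuous_ofReal.comp_continuousOn
      (ContinuousOn.mul ?_ ((extPoisson_continuousOn hy).comp hcont hmaps))) hWeq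
    exact (continuousOn_const.div (continuous_brk _).continuousOn
      fun x hx => (hbrk x hx).ne').rpow_const fun x hx =>
        Or.inl (div_pos hα0 (hbrk x hx)).ne'
  have hWmem : MemHp n p (wco φ ψ P) := memHp_of_continuousOn hn1 hp hpfin hWharm hWc
  have hadj' := hadj P f hPmem hf
  rw [hpPairing, hpPairing] at hadj'
  have hrepr := poisson_repr hn hq (hWmaps f hf) (hbd _ (Or.inr (hWmaps f hf))) hy
  rw [← hrepr]
  -- on the sphere `bd P` is the Poisson kernel, so the representation formula is a pairing with `P`
  trans ∫ ζ, bd P ζ * bd (Wstar f) ζ ∂(sphMeasure n)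
  · refine integral_congr_ae ?_
    filter_upwards [ae_mem_uSphere n, hbd P (Or.inl hPmem)] with ζ hζ hl
    rw [hl.eq_of_continuousOn (norm_of_mem_uSphere hζ) hPc]
  rw [← hadj']
  refine integral_congr_ae ?_
  filter_upwards [ae_mem_uSphere n, hbd _ (Or.inl hWmem)] with ζ hζ hl
  have hζ1 := norm_of_mem_uSphere hζ
  rw [hl.eq_of_continuousOn hζ1 hWc, hWeq ζ (Metric.sphere_subset_closedBall hζ),
    extPoisson_sphere (norm_of_mem_uSphere (hsph ζ hζ)), brk_eq, hζ1, norm_sub_rev ζ,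
    Complex.ofReal_mul]
  ring_nf
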